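/- Let U be an N × N random unitary matrix distributed according to Haar measure on U(N). For all sufficiently large N, E d_K(μ_N, ν) ≥ 3 · Var(𝒩_{N^{-1/2}}) / (2¹² N), where 𝒩_{N^{-1/2}} is the number of eigenvalue angles in an interval of length N^{-1/2}. -/

import Mathlib

open MeasureTheory Real Filter

noncomputable section

/-- The Borel σ-algebra on the unitary group `U(N)`. -/
instance (N : ℕ) : MeasurableSpace (Matrix.unitaryGroup (Fin N) ℂ) := borel _

instance (N : ℕ) : BorelSpace (Matrix.unitaryGroup (Fin N) ℂ) := ⟨rfl⟩

/-- The eigenvalue angles (in `[0, 2π)`, with multiplicity) of a unitary matrix `U`: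
the arguments of the roots of the characteristic polynomial, shifted to lie in `[0, 2π)`. -/
def eigenAngles (N : ℕ) (U : Matrix.unitaryGroup (Fin N) ℂ) : Multiset ℝ :=
  ((U : Matrix (Fin N) (Fin N) ℂ).charpoly.roots).map
    (fun z => if 0 ≤ Complex.arg z then Complex.arg z else Complex.arg z + 2 * π)

open Classical in
/-- `𝒩_A`: the number of eigenvalue angles of `U` lying in the set `A`. -/
def countAngles (N : ℕ) (U : Matrix.unitaryGroup (Fin N) ℂ) (A : Set ℝ) : ℕ :=
  Multiset.card ((eigenAngles N U).filter (· ∈ A))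

/-- `𝒩_θ`: the number of eigenvalue angles of `U` in `[0, θ]`. -/
def countFun (N : ℕ) (U : Matrix.unitaryGroup (Fin N) ℂ) (θ : ℝ) : ℕ :=
  countAngles N U (Set.Icc 0 θ)

/-- The Kolmogorov distance between the empirical spectral measure of `U` and the
uniform measure on the circle: `sup_{0 ≤ θ < 2π} |𝒩_θ/N - θ/(2π)|`. -/
def dK (N : ℕ) (U : Matrix.unitaryGroup (Fin N) ℂ) : ℝ :=
  ⨆ θ : Set.Ico (0:ℝ) (2 * π), |(countFun N U θ : ℝ) / N - (θ : ℝ) / (2 * π)|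

/-- `max_{1 ≤ k ≤ N} |𝒩_{2πk/N} - k|`. -/
def maxDev (N : ℕ) (U : Matrix.unitaryGroup (Fin N) ℂ) : ℝ :=
  ⨆ k : (Finset.Icc 1 N : Finset ℕ), |(countFun N U (2 * π * (k : ℕ) / N) : ℝ) - ((k : ℕ) : ℝ)|

end

/-!
The radial part of the Laplacian of `U(N)` identifies the law of the eigenvalues, and Heine's
identity turns the expectation of a product `∏ f(z_j)` over the eigenvalues into the Toeplitz
determinant of `f`. Hence the number of eigenvalue angles in an arc is distributed as a sum of
independent Bernoulli variables whose parameters `p_i` are the eigenvalues of a Toeplitz matrix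
`0 ≤ T ≤ 1`, and its variance is `∑ p_i (1 - p_i)`, which is at most logarithmic in `N`.

Cut out about `√N` disjoint arcs of length `N^{-1/2}` and give each the weight `2 ^ n`, where `n`
is the number of eigenvalue angles it contains. A determinant inequality shows that the weights are
pairwise negatively correlated, so by Chebyshev's inequality their sum is, with probability at
least `1 / 2`, at least half its expectation. Then some arc has a weight at least half the mean
weight `∏ (1 + p_i)`, which exceeds `2 ^ (∑ p_i)` by a factor exponential in the variance. The
count of that arc exceeds its mean by a constant times the variance, and this forces
`N * d_K(μ_N, ν)` to be as large.
-/

noncomputable section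

namespace CircularUnitary

open MvPolynomial Matrix Finset

section MatrixDerivations

lemma derivation_sum_apply {ι R A M : Type*} [CommSemiring R] [CommSemiring A] [AddCommMonoid M]
    [Algebra R A] [Module A M] [Module R M] (s : Finset ι) (D : ι → Derivation R A M) (x : A) :
    (∑ i ∈ s, D i) x = ∑ i ∈ s, D i x := by
  have h : ⇑(∑ i ∈ s, D i) = ∑ i ∈ s, ⇑(D i) := map_sum Derivation.coeFnAddMonoidHom D s
  rw [h, Finset.sum_apply]

lemma derivation_map_mul {n R A : Type*} [Fintype n] [CommRing R] [CommRing A] [Algebra R A]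
    (D : Derivation R A A) (M P : Matrix n n A) :
    (M * P).map D = M.map D * P + M * P.map D := by
  ext i j
  simp only [map_apply, mul_apply, Matrix.add_apply, map_sum, Derivation.leibniz, smul_eq_mul,
    ← sum_add_distrib]
  exact sum_congr rfl fun x _ ↦ by ring

variable {n R : Type*} [Fintype n] [DecidableEq n] [CommRing R]

/-- The derivation `∑ⱼ x_{bj} ∂/∂x_{aj}` on polynomial functions of an `n × n` matrix: the
infinitesimal left translation along the matrix unit `E_{ab}`. -/
def translationDeriv (a b : n) : Derivation R (MvPolynomial (n × n) R) (MvPolynomial (n × n) R) :=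
  mkDerivation R fun ij ↦ if ij.1 = a then X (b, ij.2) else 0

/-- The Casimir operator `∑_{a,b} E_{ab} E_{ba}` of left translations. -/
def casimir : MvPolynomial (n × n) R →ₗ[R] MvPolynomial (n × n) R :=
  ∑ a, ∑ b, (translationDeriv a b).toLinearMap ∘ₗ (translationDeriv b a).toLinearMap

/-- The derivation `∑_{a,b} (xᵏ)_{ab} E_{ab}` attached to the `k`-th power of the generic
matrix `x`. -/
def powerField (k : ℕ) : Derivation R (MvPolynomial (n × n) R) (MvPolynomial (n × n) R) :=
  ∑ a, ∑ b, (mvPolynomialX n n R ^ k) a b • translationDeriv a b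

variable (n R) in
/-- The polynomial function `x ↦ tr xᵏ` of a matrix `x`. -/
def tracePow (k : ℕ) : MvPolynomial (n × n) R := trace (mvPolynomialX n n R ^ k)

lemma casimir_apply (f : MvPolynomial (n × n) R) :
    casimir f = ∑ a, ∑ b, translationDeriv a b (translationDeriv b a f) := by
  simp [casimir]

lemma powerField_apply (k : ℕ) (f : MvPolynomial (n × n) R) :
    powerField k f = ∑ a, ∑ b, (mvPolynomialX n n R ^ k) a b * translationDeriv a b f := by
  simp [powerField, derivation_sum_apply]

lemma translationDeriv_mvPolynomialX (a b : n) :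
    (mvPolynomialX n n R).map (translationDeriv a b) = single a b 1 * mvPolynomialX n n R := by
  ext1 i j
  by_cases h : i = a
  · subst h
    simp [translationDeriv, mkDerivation_X]
  · rw [single_mul_apply_of_ne _ _ _ _ _ h]
    simp [translationDeriv, mkDerivation_X, h]

lemma translationDeriv_mvPolynomialX_pow (a b : n) (k : ℕ) :
    (mvPolynomialX n n R ^ k).map (translationDeriv a b) =
      ∑ l ∈ range k, mvPolynomialX n n R ^ l * single a b 1 * mvPolynomialX n n R ^ (k - l) := by
  induction k with
  | zero =>
    ext1 i j
    by_cases h : i = j <;> simp [h]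
  | succ k ih =>
    have shift : ∀ l ∈ range k,
        mvPolynomialX n n R ^ l * single a b 1 * mvPolynomialX n n R ^ (k - l) *
            mvPolynomialX n n R =
          mvPolynomialX n n R ^ l * single a b 1 * mvPolynomialX n n R ^ (k + 1 - l) :=
      fun l hl ↦ by rw [mul_assoc, ← pow_succ, ← Nat.sub_add_comm (mem_range.1 hl).le]
    rw [pow_succ, derivation_map_mul, ih, translationDeriv_mvPolynomialX, sum_range_succ, sum_mul,
      sum_congr rfl shift, Nat.add_sub_cancel_left, pow_one, mul_assoc (mvPolynomialX n n R ^ k)]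

lemma translationDeriv_tracePow (a b : n) (k : ℕ) :
    translationDeriv a b (tracePow n R k) = k * (mvPolynomialX n n R ^ k) b a := by
  have trace_term : ∀ l ∈ range k,
      trace (mvPolynomialX n n R ^ l * single a b 1 * mvPolynomialX n n R ^ (k - l)) =
        (mvPolynomialX n n R ^ k) b a := fun l hl ↦ by
    rw [trace_mul_comm, ← mul_assoc, ← pow_add, Nat.sub_add_cancel (mem_range.1 hl).le,
      trace_mul_single]
    simp
  calc translationDeriv a b (tracePow n R k)
      = trace ((mvPolynomialX n n R ^ k).map (translationDeriv a b)) := by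
        simp [tracePow, trace, map_sum]
    _ = k * (mvPolynomialX n n R ^ k) b a := by
        rw [translationDeriv_mvPolynomialX_pow, trace_sum, sum_congr rfl trace_term]
        simp

lemma powerField_tracePow (k l : ℕ) :
    powerField k (tracePow n R l) = l * tracePow n R (k + l) := by
  simp only [powerField_apply, translationDeriv_tracePow]
  simp only [tracePow, pow_add, trace, Matrix.diag, mul_apply, mul_sum]
  exact sum_congr rfl fun a _ ↦ sum_congr rfl fun b _ ↦ by ring

lemma translationDeriv_mvPolynomialX_pow_apply (a b : n) (k : ℕ) :
    translationDeriv a b ((mvPolynomialX n n R ^ k) a b) =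
      ∑ l ∈ range k, (mvPolynomialX n n R ^ l) a a * (mvPolynomialX n n R ^ (k - l)) b b := by
  rw [← map_apply (f := translationDeriv a b), translationDeriv_mvPolynomialX_pow,
    Matrix.sum_apply]
  refine sum_congr rfl fun l _ ↦ ?_
  rw [mul_assoc, mul_apply, sum_eq_single a (fun x _ hx ↦ ?_) (by simp)]
  · simp
  · rw [single_mul_apply_of_ne _ _ _ _ _ hx, mul_zero]

lemma casimir_tracePow (k : ℕ) :
    casimir (tracePow n R k) = k * ∑ l ∈ range k, tracePow n R l * tracePow n R (k - l) := by
  simp only [casimir_apply, translationDeriv_tracePow, Derivation.leibniz, smul_eq_mul,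
    Derivation.map_natCast, translationDeriv_mvPolynomialX_pow_apply, mul_zero, add_zero,
    ← mul_sum]
  simp only [tracePow, trace, Matrix.diag, sum_mul_sum]
  congr 1
  exact (sum_congr rfl fun a _ ↦ sum_comm).trans sum_comm

lemma casimir_mul_tracePow (f : MvPolynomial (n × n) R) (k : ℕ) :
    casimir (f * tracePow n R k) =
      casimir f * tracePow n R k + 2 * k * powerField k f + f * casimir (tracePow n R k) := by
  have leibniz_twice : ∀ a b : n, translationDeriv a b (translationDeriv b a (f * tracePow n R k)) =
      translationDeriv a b (translationDeriv b a f) * tracePow n R k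
        + k * ((mvPolynomialX n n R ^ k) b a * translationDeriv b a f)
        + k * ((mvPolynomialX n n R ^ k) a b * translationDeriv a b f)
        + f * translationDeriv a b (translationDeriv b a (tracePow n R k)) := fun a b ↦ by
    simp only [Derivation.leibniz, map_add, smul_eq_mul, translationDeriv_tracePow]
    ring
  have transposed : ∑ a, ∑ b, (mvPolynomialX n n R ^ k) b a * translationDeriv b a f =
      powerField k f := by
    rw [sum_comm, powerField_apply]
  simp only [casimir_apply, leibniz_twice, sum_add_distrib, ← mul_sum, sum_mul, transposed,
    ← powerField_apply]
  ring

end MatrixDerivations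

section EigenvalueDerivations

section EulerOperators

variable {n R : Type*} [CommRing R]

/-- The derivation `zᵢ ∂/∂zᵢ`. -/
def eulerDeriv (i : n) : Derivation R (MvPolynomial n R) (MvPolynomial n R) :=
  (X i : MvPolynomial n R) • pderiv i

lemma eulerDeriv_X [DecidableEq n] (i j : n) :
    eulerDeriv i (X j : MvPolynomial n R) = if j = i then X i else 0 := by
  by_cases h : j = i <;> simp [eulerDeriv, pderiv_X, h]

lemma eulerDeriv_X_pow [DecidableEq n] (i j : n) (k : ℕ) :
    eulerDeriv i (X j ^ k : MvPolynomial n R) =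
      if j = i then (k : MvPolynomial n R) * X i ^ k else 0 := by
  rw [Derivation.leibniz_pow, eulerDeriv_X]
  split_ifs with h
  · subst h
    cases k <;> simp [pow_succ]
  · simp

lemma eulerDeriv_monomial (i : n) (α : n →₀ ℕ) (c : R) :
    eulerDeriv i (monomial α c) = (α i : R) • monomial α c := by
  simp [eulerDeriv, X_mul_pderiv_monomial, -pderiv_monomial, Nat.cast_smul_eq_nsmul]

lemma coeff_apply_of_monomial_eigenvector {T : MvPolynomial n R →ₗ[R] MvPolynomial n R}
    {e : (n →₀ ℕ) → R} (hT : ∀ α c, T (monomial α c) = e α • monomial α c) (α : n →₀ ℕ)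
    (f : MvPolynomial n R) : coeff α (T f) = e α * coeff α f := by
  classical
  induction f using MvPolynomial.induction_on' with
  | monomial β c =>
    rw [hT, coeff_smul, coeff_monomial, smul_eq_mul]
    split_ifs with h
    · rw [h]
    · simp
  | add p q hp hq => rw [map_add, coeff_add, coeff_add, hp, hq, mul_add]

variable [Fintype n]

/-- The derivation `∑ᵢ zᵢᵏ⁺¹ ∂/∂zᵢ`, a generator of the Witt algebra. -/
def wittDeriv (k : ℕ) : Derivation R (MvPolynomial n R) (MvPolynomial n R) :=
  ∑ i, (X i ^ k : MvPolynomial n R) • eulerDeriv i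

/-- The operator `∑ᵢ (zᵢ ∂/∂zᵢ)²`, the Laplacian of the torus up to sign. -/
def torusLaplacian : MvPolynomial n R →ₗ[R] MvPolynomial n R :=
  ∑ i, (eulerDeriv i).toLinearMap ∘ₗ (eulerDeriv i).toLinearMap

lemma eulerDeriv_psum (i : n) (k : ℕ) :
    eulerDeriv i (psum n R k) = (k : MvPolynomial n R) * X i ^ k := by
  classical
  simp only [psum, map_sum, eulerDeriv_X_pow, sum_ite_eq', mem_univ, if_true]

lemma wittDeriv_apply (k : ℕ) (f : MvPolynomial n R) :
    wittDeriv k f = ∑ i, X i ^ k * eulerDeriv i f := by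
  simp [wittDeriv, derivation_sum_apply]

lemma torusLaplacian_apply (f : MvPolynomial n R) :
    torusLaplacian f = ∑ i, eulerDeriv i (eulerDeriv i f) := by
  simp [torusLaplacian]

lemma wittDeriv_X (k : ℕ) (j : n) : wittDeriv k (X j : MvPolynomial n R) = X j ^ (k + 1) := by
  classical
  simp [wittDeriv_apply, eulerDeriv_X, pow_succ]

lemma wittDeriv_psum (k l : ℕ) : wittDeriv k (psum n R l) = l * psum n R (k + l) := by
  simp only [wittDeriv_apply, eulerDeriv_psum]
  simp only [psum, pow_add, mul_sum]
  exact sum_congr rfl fun i _ ↦ by ring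

lemma torusLaplacian_mul_psum (f : MvPolynomial n R) (k : ℕ) :
    torusLaplacian (f * psum n R k) =
      torusLaplacian f * psum n R k + 2 * k * wittDeriv k f + k ^ 2 * (psum n R k * f) := by
  have leibniz_twice : ∀ i : n, eulerDeriv i (eulerDeriv i (f * psum n R k)) =
      eulerDeriv i (eulerDeriv i f) * psum n R k +
        2 * (k : MvPolynomial n R) * (X i ^ k * eulerDeriv i f) +
        (k : MvPolynomial n R) ^ 2 * (X i ^ k * f) := fun i ↦ by
    classical
    simp only [Derivation.leibniz, map_add, smul_eq_mul, eulerDeriv_psum, Derivation.map_natCast,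
      eulerDeriv_X_pow i i, if_true]
    ring
  simp only [torusLaplacian_apply, wittDeriv_apply, leibniz_twice, sum_add_distrib, ← mul_sum,
    ← sum_mul]
  rfl

lemma torusLaplacian_monomial (α : n →₀ ℕ) (c : R) :
    torusLaplacian (monomial α c) = (∑ i, (α i : R) ^ 2) • monomial α c := by
  simp only [torusLaplacian_apply, eulerDeriv_monomial, Derivation.map_smul, sum_smul, smul_smul,
    pow_two]

lemma wittDeriv_zero_monomial (α : n →₀ ℕ) (c : R) :
    wittDeriv 0 (monomial α c) = (∑ i, (α i : R)) • monomial α c := by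
  simp only [wittDeriv_apply, pow_zero, one_mul, eulerDeriv_monomial, sum_smul]

lemma coeff_torusLaplacian (α : n →₀ ℕ) (f : MvPolynomial n R) :
    coeff α (torusLaplacian f) = (∑ i, (α i : R) ^ 2) * coeff α f :=
  coeff_apply_of_monomial_eigenvector torusLaplacian_monomial α f

lemma coeff_wittDeriv_zero (α : n →₀ ℕ) (f : MvPolynomial n R) :
    coeff α (wittDeriv 0 f) = (∑ i, (α i : R)) * coeff α f :=
  coeff_apply_of_monomial_eigenvector (T := (wittDeriv 0).toLinearMap) wittDeriv_zero_monomial α f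

end EulerOperators

section Vandermonde

lemma derivation_prod_of_eq_mul {ι R A : Type*} [CommRing R] [CommRing A] [Algebra R A]
    (D : Derivation R A A) (s : Finset ι) (f h : ι → A) (hf : ∀ i ∈ s, D (f i) = f i * h i) :
    D (∏ i ∈ s, f i) = (∏ i ∈ s, f i) * ∑ i ∈ s, h i := by
  classical
  induction s using Finset.induction_on with
  | empty => simp
  | insert a s ha ih =>
    rw [prod_insert ha, sum_insert ha, Derivation.leibniz,
      ih fun i hi ↦ hf i (mem_insert_of_mem hi), hf a (mem_insert_self _ _)]
    simp only [smul_eq_mul]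
    ring

lemma two_mul_sum_Ioi_geom_sum₂ {n A : Type*} [Fintype n] [LinearOrder n]
    [LocallyFiniteOrderTop n] [LocallyFiniteOrderBot n] [CommRing A] (x : n → A) (k : ℕ) :
    2 * ∑ i, ∑ j ∈ Ioi i, ∑ l ∈ range (k + 1), x j ^ l * x i ^ (k - l) =
      ∑ l ∈ range (k + 1), (∑ i, x i ^ l) * (∑ i, x i ^ (k - l)) - (k + 1) * ∑ i, x i ^ k := by
  set h : n → n → A := fun i j ↦ ∑ l ∈ range (k + 1), x j ^ l * x i ^ (k - l) with h_def
  have h_comm (i j : n) : h i j = h j i := geom_sum₂_comm (x j) (x i) (k + 1)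
  have h_self (i : n) : h i i = (k + 1) * x i ^ k := by
    simpa using geom_sum₂_self (x i) (k + 1)
  have h_all : ∑ i, ∑ j, h i j = ∑ l ∈ range (k + 1), (∑ i, x i ^ l) * (∑ i, x i ^ (k - l)) := by
    simp only [h_def, sum_mul_sum]
    rw [sum_comm, sum_congr rfl fun j _ ↦ sum_comm, sum_comm]
  calc 2 * ∑ i, ∑ j ∈ Ioi i, h i j
      = ∑ i, ∑ j ∈ Ioi i, (h j i + h i j) := by
        simp only [h_comm, ← two_mul, mul_sum]
    _ = ∑ i, ∑ j ∈ {i}ᶜ, h j i := sum_sum_Ioi_add_eq_sum_sum_off_diag _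
    _ = ∑ i, (∑ j, h i j - h i i) := by
        refine sum_congr rfl fun i _ ↦ ?_
        rw [← sum_compl_add_sum {i}, sum_singleton, add_sub_cancel_right]
        exact sum_congr rfl fun j _ ↦ h_comm j i
    _ = _ := by
        rw [sum_sub_distrib, h_all, mul_sum]
        simp only [h_self]

variable {N : ℕ} {R : Type*} [CommRing R]

variable (N R) in
/-- The Vandermonde polynomial `∏_{i<j} (zⱼ - zᵢ)`. -/
def vandermondePoly : MvPolynomial (Fin N) R :=
  (vandermonde (X : Fin N → MvPolynomial (Fin N) R)).det

/-- The exponent `(m, m + 1, …, m + N - 1)`. -/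
def staircase (N m : ℕ) : Fin N →₀ ℕ := Finsupp.equivFunOnFinite.symm fun i ↦ m + i

lemma staircase_apply (m : ℕ) (i : Fin N) : staircase N m i = m + i := rfl

lemma wittDeriv_vandermondePoly (k : ℕ) :
    2 * wittDeriv k (vandermondePoly N R) =
      (∑ l ∈ range (k + 1), psum (Fin N) R l * psum (Fin N) R (k - l)
        - (k + 1) * psum (Fin N) R k) * vandermondePoly N R := by
  have log_deriv : wittDeriv k (vandermondePoly N R) = vandermondePoly N R *
      ∑ i, ∑ j ∈ Ioi i, ∑ l ∈ range (k + 1), X j ^ l * X i ^ (k - l) := by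
    rw [vandermondePoly, det_vandermonde]
    refine derivation_prod_of_eq_mul _ _ _ _ fun i _ ↦
      derivation_prod_of_eq_mul _ _ _ _ fun j _ ↦ ?_
    rw [map_sub, wittDeriv_X, wittDeriv_X, mul_comm]
    exact ((Commute.all _ _).geom_sum₂_mul (k + 1)).symm
  rw [log_deriv, mul_left_comm, two_mul_sum_Ioi_geom_sum₂, mul_comm]
  rfl

lemma vandermondePoly_eq_sum : vandermondePoly N R =
    ∑ ϖ : Equiv.Perm (Fin N), Equiv.Perm.sign ϖ • monomial ((staircase N 0).mapDomain ϖ) 1 := by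
  rw [vandermondePoly, det_apply]
  refine sum_congr rfl fun ϖ _ ↦ congrArg _ ?_
  rw [monomial_eq, Finsupp.prod_fintype _ _ (by simp), C_1, one_mul,
    ← Equiv.prod_comp ϖ fun i ↦ X i ^ (staircase N 0).mapDomain ϖ i]
  refine prod_congr rfl fun i _ ↦ ?_
  rw [Finsupp.mapDomain_apply ϖ.injective, staircase_apply, zero_add, vandermonde_apply]

/-- The monomials of the Vandermonde polynomial are permutations of each other. -/
lemma apply_vandermondePoly_of_monomial_eigenvector
    {T : MvPolynomial (Fin N) R →ₗ[R] MvPolynomial (Fin N) R} {e : ℕ → R}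
    (hT : ∀ α c, T (monomial α c) = (∑ i, e (α i)) • monomial α c) :
    T (vandermondePoly N R) = (∑ i : Fin N, e i) • vandermondePoly N R := by
  have perm_sum (ϖ : Equiv.Perm (Fin N)) :
      ∑ i, e ((staircase N 0).mapDomain ϖ i) = ∑ i : Fin N, e i := by
    rw [← Equiv.sum_comp ϖ]
    simp [Finsupp.mapDomain_apply ϖ.injective, staircase_apply]
  rw [vandermondePoly_eq_sum, map_sum, smul_sum]
  refine sum_congr rfl fun ϖ _ ↦ ?_
  rw [Units.smul_def, map_zsmul, hT, perm_sum, smul_comm]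

lemma torusLaplacian_vandermondePoly :
    torusLaplacian (vandermondePoly N R) = (∑ i : Fin N, (i : R) ^ 2) • vandermondePoly N R :=
  apply_vandermondePoly_of_monomial_eigenvector (e := fun a ↦ (a : R) ^ 2) torusLaplacian_monomial

lemma wittDeriv_zero_vandermondePoly :
    wittDeriv 0 (vandermondePoly N R) = (∑ i : Fin N, (i : R)) • vandermondePoly N R :=
  apply_vandermondePoly_of_monomial_eigenvector (T := (wittDeriv 0).toLinearMap)
    (e := fun a ↦ (a : R)) wittDeriv_zero_monomial

lemma rename_vandermondePoly (ϖ : Equiv.Perm (Fin N)) :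
    rename ϖ (vandermondePoly N R) = Equiv.Perm.sign ϖ • vandermondePoly N R := by
  have map_eq : (rename ϖ).mapMatrix (vandermonde (X : Fin N → MvPolynomial (Fin N) R)) =
      (vandermonde X).submatrix ϖ id := by
    ext1 i j
    simp [vandermonde_apply]
  rw [vandermondePoly, AlgHom.map_det, map_eq, det_permute, Units.smul_def, zsmul_eq_mul]

lemma vandermondePoly_ne_zero [IsDomain R] : vandermondePoly N R ≠ 0 :=
  det_vandermonde_ne_zero_iff.2 X_injective

end Vandermonde

end EigenvalueDerivations

section RadialParts

variable {n R : Type*} [Fintype n] [CommRing R]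

variable (n R) in
/-- The homomorphism from formal power sums to symmetric polynomials that sends the `k`-th variable
to `∑ᵢ zᵢᵏ`. -/
def psumHom : MvPolynomial ℕ R →ₐ[R] MvPolynomial n R := aeval (psum n R)

/-- The common lift of `powerField k` and `wittDeriv k` to formal power sums. -/
def formalWittDeriv (k : ℕ) : Derivation R (MvPolynomial ℕ R) (MvPolynomial ℕ R) :=
  mkDerivation R fun l ↦ (l : MvPolynomial ℕ R) * X (k + l)

lemma psumHom_X (k : ℕ) : psumHom n R (X k) = psum n R k := aeval_X _ _

lemma psumHom_isSymmetric (q : MvPolynomial ℕ R) : (psumHom n R q).IsSymmetric := fun ϖ ↦ by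
  have h : (rename ϖ).comp (psumHom n R) = psumHom n R := MvPolynomial.algHom_ext fun k ↦ by
    rw [AlgHom.comp_apply, psumHom_X]
    exact psum_isSymmetric _ _ _ ϖ
  exact DFunLike.congr_fun h q

lemma wittDeriv_psumHom (k : ℕ) (q : MvPolynomial ℕ R) :
    wittDeriv k (psumHom n R q) = psumHom n R (formalWittDeriv k q) := by
  induction q using MvPolynomial.induction_on with
  | C a => simp [← algebraMap_eq]
  | add p q hp hq => simp only [map_add, hp, hq]
  | mul_X p l hp =>
    simp only [map_mul, map_add, Derivation.leibniz, smul_eq_mul, hp, psumHom_X,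
      wittDeriv_psum, formalWittDeriv, mkDerivation_X, map_natCast]

variable [DecidableEq n]

variable (n R) in
/-- The homomorphism from formal power sums to class functions that sends the `k`-th variable to
`tr xᵏ`. -/
def traceHom : MvPolynomial ℕ R →ₐ[R] MvPolynomial (n × n) R := aeval (tracePow n R)

lemma traceHom_X (k : ℕ) : traceHom n R (X k) = tracePow n R k := aeval_X _ _

lemma powerField_traceHom (k : ℕ) (q : MvPolynomial ℕ R) :
    powerField k (traceHom n R q) = traceHom n R (formalWittDeriv k q) := by
  induction q using MvPolynomial.induction_on with
  | C a => simp [← algebraMap_eq]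
  | add p q hp hq => simp only [map_add, hp, hq]
  | mul_X p l hp =>
    simp only [map_mul, map_add, Derivation.leibniz, smul_eq_mul, hp, traceHom_X,
      powerField_tracePow, formalWittDeriv, mkDerivation_X, map_natCast]

/-- Harish-Chandra's radial part of the Casimir operator: conjugation by the Vandermonde
polynomial turns it into a constant-coefficient operator on the torus. -/
theorem exists_radialPart_casimir {N : ℕ} (q : MvPolynomial ℕ R) :
    ∃ r : MvPolynomial ℕ R, casimir (traceHom (Fin N) R q) = traceHom (Fin N) R r ∧
      torusLaplacian (psumHom (Fin N) R q * vandermondePoly N R) =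
        (psumHom (Fin N) R r + (N - 1) * wittDeriv 0 (psumHom (Fin N) R q)
          + (∑ i : Fin N, (i : R) ^ 2) • psumHom (Fin N) R q) * vandermondePoly N R := by
  induction q using MvPolynomial.induction_on with
  | C a =>
    refine ⟨0, ?_, ?_⟩
    · simp [casimir_apply, ← algebraMap_eq]
    · rw [← algebraMap_eq, AlgHom.commutes, ← Algebra.smul_def, map_smul,
        torusLaplacian_vandermondePoly, map_zero, Derivation.map_algebraMap, mul_zero, zero_add,
        zero_add, smul_mul_assoc, ← Algebra.smul_def, smul_comm]
  | add p q hp hq =>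
    obtain ⟨r, casimir_p, laplacian_p⟩ := hp
    obtain ⟨s, casimir_q, laplacian_q⟩ := hq
    refine ⟨r + s, by simp only [map_add, casimir_p, casimir_q], ?_⟩
    simp only [map_add, add_mul, laplacian_p, laplacian_q, smul_add]
    ring
  | mul_X p k hp =>
    obtain ⟨r, casimir_p, laplacian_p⟩ := hp
    refine ⟨r * X k + 2 * (k : MvPolynomial ℕ R) * formalWittDeriv k p +
      p * ((k : MvPolynomial ℕ R) * ∑ l ∈ range k, X l * X (k - l)), ?_, ?_⟩
    · simp only [map_mul, map_add, map_natCast, map_sum, map_ofNat, traceHom_X,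
        casimir_mul_tracePow, casimir_p, powerField_traceHom, casimir_tracePow]
    · have witt_vandermonde := wittDeriv_vandermondePoly (N := N) (R := R) k
      have psum_zero : psum (Fin N) R 0 = N := by simp
      rw [sum_range_succ, Nat.sub_self, psum_zero] at witt_vandermonde
      simp only [map_mul, map_add, map_natCast, map_sum, map_ofNat, psumHom_X]
      rw [mul_right_comm, torusLaplacian_mul_psum, laplacian_p]
      simp only [Derivation.leibniz, smul_eq_mul, wittDeriv_psum, wittDeriv_psumHom, zero_add]
      rw [← smul_mul_assoc]
      linear_combination (k : MvPolynomial (Fin N) R) * psumHom (Fin N) R p * witt_vandermonde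

end RadialParts

section Energy

variable {N : ℕ}

/-- The eigenvalue at the monomial `α` of the constant-coefficient operator
`∑ᵢ (zᵢ∂ᵢ - m)(zᵢ∂ᵢ - m - N + 1)`. -/
def energy (m : ℕ) (α : Fin N →₀ ℕ) : ℤ := ∑ i, ((α i : ℤ) - m) * (α i - m - N + 1)

lemma subset_of_sum_eq_sum {ι M : Type*} [DecidableEq ι] [AddCommGroup M] [LinearOrder M]
    [IsOrderedAddMonoid M] {s t : Finset ι} {w : ι → M} (h : ∑ x ∈ s, w x = ∑ x ∈ t, w x)
    (h_nonpos : ∀ x ∈ t, w x ≤ 0) (h_pos : ∀ x ∈ s \ t, 0 < w x) : s ⊆ t := by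
  rw [← sum_sdiff_eq_sum_sdiff_iff] at h
  by_contra hst
  have neg : ∑ x ∈ t \ s, w x ≤ 0 := sum_nonpos fun x hx ↦ h_nonpos x (mem_sdiff.1 hx).1
  exact ((sum_pos h_pos (sdiff_nonempty.2 hst)).trans_eq h).not_ge neg

lemma exists_perm_of_injective_of_mem_Ico {m : ℕ} {α : Fin N → ℕ} (hα : Function.Injective α)
    (h : ∀ i, α i ∈ Ico m (m + N)) : ∃ ϖ : Equiv.Perm (Fin N), ∀ i, α i = m + ϖ i := by
  simp only [mem_Ico] at h
  let g : Fin N → Fin N := fun i ↦ ⟨α i - m, by have := h i; lia⟩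
  have hg : Function.Injective g := fun i j hij ↦ hα <| by
    have := congrArg Fin.val hij
    have := h i
    have := h j
    simp only [g] at *
    lia
  refine ⟨.ofBijective g (Finite.injective_iff_bijective.1 hg), fun i ↦ ?_⟩
  simp [g, Nat.add_sub_cancel' (h i).1]

/-- The summand of the energy is nonpositive exactly on `[m, m + N)`, which the staircase fills. -/
lemma exists_perm_of_energy_eq {m : ℕ} {α : Fin N →₀ ℕ} (hα : Function.Injective α)
    (h : energy m α = energy m (staircase N m)) :
    ∃ ϖ : Equiv.Perm (Fin N), α = (staircase N m).mapDomain ϖ := by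
  let w : ℕ → ℤ := fun x ↦ ((x : ℤ) - m) * (x - m - N + 1)
  have energy_eq : energy m α = ∑ x ∈ univ.image α, w x := (sum_image (f := w) hα.injOn).symm
  have energy_staircase : energy m (staircase N m) = ∑ x ∈ Ico m (m + N), w x := by
    rw [sum_Ico_eq_sum_range, Nat.add_sub_cancel_left, ← Fin.sum_univ_eq_sum_range]
    rfl
  have image_subset : univ.image α ⊆ Ico m (m + N) := by
    refine subset_of_sum_eq_sum (w := w) (by rw [← energy_eq, h, energy_staircase])
      (fun x hx ↦ ?_) (fun x hx ↦ ?_)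
    · obtain ⟨hmx, hxN⟩ := mem_Ico.1 hx
      exact mul_nonpos_of_nonneg_of_nonpos (by lia) (by lia)
    · obtain ⟨hx_image, hx_out⟩ := mem_sdiff.1 hx
      obtain ⟨i, -, -⟩ := mem_image.1 hx_image
      have N_pos : 0 < N := i.pos
      rw [mem_Ico] at hx_out
      rcases le_or_gt m x with hmx | hxm
      · exact mul_pos (by lia) (by lia)
      · exact mul_pos_of_neg_of_neg (by lia) (by lia)
  obtain ⟨ϖ, hϖ⟩ := exists_perm_of_injective_of_mem_Ico hα fun i ↦
    image_subset (mem_image_of_mem _ (mem_univ i))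
  refine ⟨ϖ⁻¹, Finsupp.ext fun i ↦ ?_⟩
  rw [Finsupp.mapDomain_equiv_apply, staircase_apply, hϖ]
  rfl

end Energy

section SemiInvariantFunctionals

variable {N m : ℕ} {R : Type*} [CommRing R]

/-- The constant-coefficient operator `∑ᵢ (zᵢ∂ᵢ - m)(zᵢ∂ᵢ - m - N + 1)`. -/
def shiftedLaplacian (m : ℕ) : MvPolynomial (Fin N) R →ₗ[R] MvPolynomial (Fin N) R :=
  torusLaplacian - (2 * m + N - 1 : R) • (wittDeriv 0).toLinearMap
    + (N * (m * (m + N - 1)) : R) • LinearMap.id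

lemma energy_cast (m : ℕ) (α : Fin N →₀ ℕ) :
    (energy m α : R) = ∑ i, (α i : R) ^ 2 - (2 * m + N - 1) * ∑ i, (α i : R)
      + N * (m * (m + N - 1)) := by
  have expand (i : Fin N) : ((α i : R) - m) * (α i - m - N + 1) =
      (α i : R) ^ 2 - (2 * m + N - 1) * α i + m * (m + N - 1) := by ring
  simp only [energy, Int.cast_sum, Int.cast_mul, Int.cast_add, Int.cast_sub, Int.cast_natCast,
    Int.cast_one, expand, sum_add_distrib, sum_sub_distrib, mul_sum, sum_const, card_univ,
    Fintype.card_fin, nsmul_eq_mul]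

lemma coeff_shiftedLaplacian (α : Fin N →₀ ℕ) (f : MvPolynomial (Fin N) R) :
    coeff α (shiftedLaplacian m f) = energy m α * coeff α f := by
  simp only [shiftedLaplacian, LinearMap.add_apply, LinearMap.sub_apply, LinearMap.smul_apply,
    Derivation.coeFn_coe, LinearMap.id_apply, coeff_add, coeff_sub, coeff_smul,
    coeff_torusLaplacian, coeff_wittDeriv_zero, smul_eq_mul, energy_cast]
  ring

lemma exists_psumHom_mul_eq_shiftedLaplacian (m : ℕ) (q : MvPolynomial ℕ R) :
    ∃ q' : MvPolynomial ℕ R,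
      psumHom (Fin N) R q' * vandermondePoly N R =
        shiftedLaplacian m (psumHom (Fin N) R q * vandermondePoly N R) ∧
      traceHom (Fin N) R q' = casimir (traceHom (Fin N) R q)
        - (2 * m : R) • powerField 0 (traceHom (Fin N) R q)
        + (energy m (staircase N 0) : R) • traceHom (Fin N) R q := by
  obtain ⟨r, casimir_q, laplacian_q⟩ := exists_radialPart_casimir (N := N) q
  refine ⟨r - (2 * m : R) • formalWittDeriv 0 q + (energy m (staircase N 0) : R) • q, ?_, ?_⟩
  · have energy_zero : (energy m (staircase N 0) : R) = ∑ i : Fin N, (i : R) ^ 2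
        - (2 * m + N - 1) * ∑ i : Fin N, (i : R) + N * (m * (m + N - 1)) := by
      simp only [energy_cast, staircase_apply, zero_add]
    simp only [shiftedLaplacian, LinearMap.add_apply, LinearMap.sub_apply, LinearMap.smul_apply,
      Derivation.coeFn_coe, LinearMap.id_apply, laplacian_q, Derivation.leibniz,
      wittDeriv_zero_vandermondePoly, wittDeriv_psumHom, energy_zero, map_add, map_sub, 
      smul_eq_mul, MvPolynomial.smul_eq_C_mul, map_mul, map_one, map_natCast, map_ofNat, algHom_C,
      algebraMap_eq]
    ring
  · simp only [map_add, map_sub, map_smul, casimir_q, powerField_traceHom]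

/-- A linear functional on polynomial functions of matrices which infinitesimal left translations
scale like integration against `(det x)⁻ᵐ` over the unitary group. -/
def IsSemiInvariant (m : ℕ) (ℓ : MvPolynomial (Fin N × Fin N) R →ₗ[R] R) : Prop :=
  ∀ a b P, ℓ (translationDeriv a b P) = if a = b then m * ℓ P else 0

variable {ℓ : MvPolynomial (Fin N × Fin N) R →ₗ[R] R}

lemma IsSemiInvariant.apply_casimir (h : IsSemiInvariant m ℓ)
    (f : MvPolynomial (Fin N × Fin N) R) : ℓ (casimir f) = N * m ^ 2 * ℓ f := by
  simp only [casimir_apply, map_sum, h _ _, sum_ite_eq, mem_univ, if_true, sum_const, card_univ,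
    Fintype.card_fin, nsmul_eq_mul]
  ring

lemma IsSemiInvariant.apply_powerField_zero (h : IsSemiInvariant m ℓ)
    (f : MvPolynomial (Fin N × Fin N) R) : ℓ (powerField 0 f) = N * m * ℓ f := by
  simp only [powerField_apply, pow_zero, Matrix.one_apply, ite_mul, one_mul, zero_mul,
    sum_ite_eq, mem_univ, if_true, map_sum, h _ _, sum_const, card_univ, Fintype.card_fin,
    nsmul_eq_mul]
  ring

lemma energy_staircase_zero (m : ℕ) :
    energy m (staircase N 0) = energy m (staircase N m) + N * m ^ 2 := by
  have symm : ∑ i : Fin N, (2 * (i : ℤ) - N + 1) = 0 := by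
    have gauss : (∑ i ∈ range N, (i : ℤ)) * 2 = N * (N - 1) := by
      rw [← Nat.cast_sum, ← Nat.cast_ofNat, ← Nat.cast_mul, sum_range_id_mul_two]
      rcases N with _ | N <;> simp
    rw [Fin.sum_univ_eq_sum_range (fun i ↦ 2 * (i : ℤ) - N + 1), sum_add_distrib, sum_sub_distrib,
      ← mul_sum, mul_comm, gauss]
    simp
    ring
  have expand (i : Fin N) : ((staircase N 0 i : ℤ) - m) * (staircase N 0 i - m - N + 1) =
      ((staircase N m i : ℤ) - m) * (staircase N m i - m - N + 1) + m ^ 2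
        - m * (2 * (i : ℤ) - N + 1) := by
    simp only [staircase_apply, Nat.cast_add, Nat.cast_zero]
    ring
  simp only [energy, expand, sum_sub_distrib, sum_add_distrib, ← mul_sum, symm]
  simp

lemma IsSemiInvariant.exists_eigenvector_lift (h : IsSemiInvariant m ℓ) (q : MvPolynomial ℕ R) :
    ∃ q' : MvPolynomial ℕ R,
      psumHom (Fin N) R q' * vandermondePoly N R =
        shiftedLaplacian m (psumHom (Fin N) R q * vandermondePoly N R) ∧
      ℓ (traceHom (Fin N) R q') = energy m (staircase N m) * ℓ (traceHom (Fin N) R q) := by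
  obtain ⟨q', laplacian_q, trace_q⟩ := exists_psumHom_mul_eq_shiftedLaplacian (N := N) m q
  refine ⟨q', laplacian_q, ?_⟩
  rw [trace_q, map_add, map_sub, map_smul, map_smul, h.apply_casimir, h.apply_powerField_zero,
    energy_staircase_zero]
  push_cast
  simp only [smul_eq_mul]
  ring

lemma coeff_mapDomain_psumHom_mul_vandermondePoly (q : MvPolynomial ℕ R) (ϖ : Equiv.Perm (Fin N))
    (α : Fin N →₀ ℕ) :
    coeff (α.mapDomain ϖ) (psumHom (Fin N) R q * vandermondePoly N R) =
      Equiv.Perm.sign ϖ • coeff α (psumHom (Fin N) R q * vandermondePoly N R) := by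
  have h := coeff_rename_mapDomain ϖ ϖ.injective (psumHom (Fin N) R q * vandermondePoly N R) α
  rw [map_mul, psumHom_isSymmetric, rename_vandermondePoly, mul_smul_comm, Units.smul_def,
    coeff_smul, ← Units.smul_def] at h
  rw [← h, smul_smul, Int.units_mul_self, one_smul]

lemma coeff_staircase_vandermondePoly : coeff (staircase N 0) (vandermondePoly N R) = 1 := by
  rw [vandermondePoly_eq_sum, coeff_sum, sum_eq_single 1 (fun ϖ _ hϖ ↦ ?_) (by simp)]
  · simp
  · rw [Units.smul_def, coeff_smul, coeff_monomial, if_neg, smul_zero]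
    refine fun h ↦ hϖ (Equiv.ext fun i ↦ Fin.ext ?_)
    simpa [Finsupp.mapDomain_apply ϖ.injective, staircase_apply, eq_comm] using
      DFunLike.congr_fun h (ϖ i)

lemma coeff_staircase_prod_X_pow_mul_vandermondePoly :
    coeff (staircase N m) ((∏ i, X i ^ m) * vandermondePoly N R) = 1 := by
  have prod_eq : (∏ i, X i ^ m : MvPolynomial (Fin N) R) =
      monomial (Finsupp.equivFunOnFinite.symm fun _ ↦ m) 1 := by
    rw [monomial_eq, Finsupp.prod_fintype _ _ (by simp)]
    simp
  have staircase_eq :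
      staircase N m = Finsupp.equivFunOnFinite.symm (fun _ ↦ m) + staircase N 0 := by
    ext i
    simp [staircase_apply]
  rw [prod_eq, staircase_eq, coeff_monomial_mul, coeff_staircase_vandermondePoly, one_mul]

variable [IsDomain R] [CharZero R]

/-- Antisymmetry forces the exponents of a nonzero coefficient to be distinct. -/
lemma energy_ne_of_coeff_ne_zero {q : MvPolynomial ℕ R} {α : Fin N →₀ ℕ}
    (hq : coeff (staircase N m) (psumHom (Fin N) R q * vandermondePoly N R) = 0)
    (hα : coeff α (psumHom (Fin N) R q * vandermondePoly N R) ≠ 0) :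
    energy m α ≠ energy m (staircase N m) := fun h ↦ by
  have α_injective : Function.Injective α := fun i j hij ↦ by
    by_contra hne
    have h_swap := coeff_mapDomain_psumHom_mul_vandermondePoly q (Equiv.swap i j) α
    have swap_fix : α.mapDomain (Equiv.swap i j) = α := Finsupp.ext fun x ↦ by
      rw [Finsupp.mapDomain_equiv_apply, Equiv.symm_swap]
      rcases eq_or_ne x i with rfl | hxi
      · simp [hij]
      rcases eq_or_ne x j with rfl | hxj
      · simp [hij]
      rw [Equiv.swap_apply_of_ne_of_ne hxi hxj]
    rw [swap_fix, Equiv.Perm.sign_swap hne, Units.neg_smul, one_smul] at h_swap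
    exact hα (CharZero.eq_neg_self_iff.1 h_swap)
  obtain ⟨ϖ, rfl⟩ := exists_perm_of_energy_eq α_injective h
  rw [coeff_mapDomain_psumHom_mul_vandermondePoly, hq, smul_zero] at hα
  exact hα rfl

/-- The operator `shiftedLaplacian m - e` removes the energy `e` from the spectral decomposition of
`psumHom q * vandermondePoly` and multiplies `ℓ (traceHom q)` by a nonzero number. -/
lemma IsSemiInvariant.eq_zero_of_energy_mem (h : IsSemiInvariant m ℓ)
    (h_ker : ∀ q, psumHom (Fin N) R q = 0 → ℓ (traceHom (Fin N) R q) = 0) (E : Finset ℤ)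
    (hE : energy m (staircase N m) ∉ E) (q : MvPolynomial ℕ R)
    (hq : ∀ α, coeff α (psumHom (Fin N) R q * vandermondePoly N R) ≠ 0 → energy m α ∈ E) :
    ℓ (traceHom (Fin N) R q) = 0 := by
  classical
  induction E using Finset.induction_on generalizing q with
  | empty =>
    have zero : psumHom (Fin N) R q * vandermondePoly N R = 0 :=
      MvPolynomial.ext _ _ fun α ↦ not_not.1 fun hα ↦ notMem_empty _ (hq α hα)
    exact h_ker q ((mul_eq_zero.1 zero).resolve_right vandermondePoly_ne_zero)
  | insert e E _ ih =>
    obtain ⟨q', laplacian_q, ℓ_q'⟩ := h.exists_eigenvector_lift q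
    have coeff_q' (α) : coeff α (psumHom (Fin N) R (q' - (e : R) • q) * vandermondePoly N R) =
        (energy m α - e) * coeff α (psumHom (Fin N) R q * vandermondePoly N R) := by
      rw [map_sub, map_smul, sub_mul, smul_mul_assoc, laplacian_q, coeff_sub, coeff_smul,
        coeff_shiftedLaplacian, smul_eq_mul, sub_mul]
    have ℓ_zero : ℓ (traceHom (Fin N) R (q' - (e : R) • q)) = 0 := by
      refine ih (fun hmem ↦ hE (mem_insert_of_mem hmem)) _ fun α hα ↦ ?_
      rw [coeff_q'] at hα
      refine (mem_insert.1 (hq α (right_ne_zero_of_mul hα))).resolve_left ?_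
      rintro rfl
      exact left_ne_zero_of_mul hα (sub_self _)
    rw [map_sub, map_smul, map_sub, map_smul, ℓ_q', smul_eq_mul, ← sub_mul] at ℓ_zero
    refine (mul_eq_zero.1 ℓ_zero).resolve_left (sub_ne_zero.2 ?_)
    exact Int.cast_injective.ne fun he ↦ hE (he ▸ mem_insert_self _ _)

theorem IsSemiInvariant.apply_traceHom (h : IsSemiInvariant m ℓ)
    (h_ker : ∀ q, psumHom (Fin N) R q = 0 → ℓ (traceHom (Fin N) R q) = 0) {q₀ : MvPolynomial ℕ R}
    (hq₀ : coeff (staircase N m) (psumHom (Fin N) R q₀ * vandermondePoly N R) = 1)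
    (q : MvPolynomial ℕ R) :
    ℓ (traceHom (Fin N) R q) =
      coeff (staircase N m) (psumHom (Fin N) R q * vandermondePoly N R) *
        ℓ (traceHom (Fin N) R q₀) := by
  set c := coeff (staircase N m) (psumHom (Fin N) R q * vandermondePoly N R) with hc
  have coeff_zero :
      coeff (staircase N m) (psumHom (Fin N) R (q - c • q₀) * vandermondePoly N R) = 0 := by
    rw [map_sub, map_smul, sub_mul, smul_mul_assoc, coeff_sub, coeff_smul, hq₀, ← hc, smul_eq_mul,
      mul_one, sub_self]
  have ℓ_zero := h.eq_zero_of_energy_mem h_ker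
    ((psumHom (Fin N) R (q - c • q₀) * vandermondePoly N R).support.image (energy m))
    (fun hmem ↦ by
      obtain ⟨α, hα, h_eq⟩ := mem_image.1 hmem
      exact energy_ne_of_coeff_ne_zero coeff_zero (mem_support_iff.1 hα) h_eq)
    _ fun α hα ↦ mem_image_of_mem _ (mem_support_iff.2 hα)
  rwa [map_sub, map_smul, map_sub, map_smul, sub_eq_zero, smul_eq_mul] at ℓ_zero

end SemiInvariantFunctionals

section Eigenvalues

variable {n K : Type*} [Fintype n] [DecidableEq n] [Field K] [IsAlgClosed K]

lemma card_roots_charpoly (A : Matrix n n K) :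
    Multiset.card A.charpoly.roots = Fintype.card n := by
  rw [Polynomial.splits_iff_card_roots.1 (IsAlgClosed.splits A.charpoly),
    charpoly_natDegree_eq_dim]

lemma charpoly_eq_prod_roots (A : Matrix n n K) :
    A.charpoly = (A.charpoly.roots.map fun r ↦ Polynomial.X - Polynomial.C r).prod :=
  (IsAlgClosed.splits A.charpoly).eq_prod_roots_of_monic A.charpoly_monic

lemma det_add_algebraMap (A : Matrix n n K) (c : K) :
    (A + algebraMap K _ c).det = (A.charpoly.roots.map (· + c)).prod := by
  have h_neg : A + algebraMap K _ c = -(scalar n (-c) - A) := by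
    rw [neg_sub, map_neg, sub_neg_eq_add]
    rfl
  have h_factor (r : K) : r + c = -1 * (-c - r) := by ring
  simp only [h_factor, Multiset.prod_map_mul, Multiset.map_const', Multiset.prod_replicate,
    card_roots_charpoly]
  rw [h_neg, det_neg, ← eval_charpoly]
  conv_lhs => rw [charpoly_eq_prod_roots A, Polynomial.eval_multiset_prod, Multiset.map_map]
  simp only [Function.comp_def, Polynomial.eval_sub, Polynomial.eval_X, Polynomial.eval_C]

theorem det_aeval (A : Matrix n n K) (p : Polynomial K) :
    (Polynomial.aeval A p).det = (A.charpoly.roots.map p.eval).prod := by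
  induction IsAlgClosed.splits p using Submonoid.closure_induction with
  | mem p hp =>
    rcases hp with ⟨c, rfl⟩ | ⟨c, rfl⟩
    · simp [Matrix.algebraMap_eq_diagonal, card_roots_charpoly]
    · simp [det_add_algebraMap]
  | one => simp
  | mul p q _ _ hp hq => simp [hp, hq]

theorem trace_pow_eq_sum_roots_charpoly (A : Matrix n n K) (k : ℕ) :
    trace (A ^ k) = (A.charpoly.roots.map (· ^ k)).sum := by
  have charpoly_pow : (A ^ k).charpoly =
      ((A.charpoly.roots.map (· ^ k)).map fun r ↦ Polynomial.X - Polynomial.C r).prod := by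
    refine Polynomial.funext fun x ↦ ?_
    have h := det_aeval A (Polynomial.C x - Polynomial.X ^ k)
    simp only [map_sub, map_pow, Polynomial.aeval_X, Polynomial.aeval_C] at h
    rw [eval_charpoly, Polynomial.eval_multiset_prod, Multiset.map_map, Multiset.map_map]
    simp only [Function.comp_def, Polynomial.eval_sub, Polynomial.eval_X, Polynomial.eval_C,
      Polynomial.eval_pow] at h ⊢
    exact h
  rw [trace_eq_sum_roots_charpoly, charpoly_pow, Polynomial.roots_multiset_prod_X_sub_C]

variable {N : ℕ}

lemma exists_univ_map_eq_roots_charpoly (A : Matrix (Fin N) (Fin N) K) :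
    ∃ z : Fin N → K, univ.val.map z = A.charpoly.roots := by
  have h_card : A.charpoly.roots.toList.length = N := by
    rw [Multiset.length_toList, card_roots_charpoly, Fintype.card_fin]
  refine ⟨fun i ↦ A.charpoly.roots.toList.get (i.cast h_card.symm), ?_⟩
  rw [Fin.univ_val_map, ← List.ofFn_congr h_card fun i ↦ A.charpoly.roots.toList.get i,
    List.ofFn_get, Multiset.coe_toList]

/-- The eigenvalues of a matrix, with multiplicity and in an arbitrary order. -/
def eigenvalueVec (A : Matrix (Fin N) (Fin N) K) : Fin N → K :=
  (exists_univ_map_eq_roots_charpoly A).choose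

lemma univ_map_eigenvalueVec (A : Matrix (Fin N) (Fin N) K) :
    univ.val.map (eigenvalueVec A) = A.charpoly.roots :=
  (exists_univ_map_eq_roots_charpoly A).choose_spec

lemma det_eq_prod_eigenvalueVec (A : Matrix (Fin N) (Fin N) K) :
    A.det = ∏ i, eigenvalueVec A i := by
  rw [det_eq_prod_roots_charpoly, ← univ_map_eigenvalueVec]
  rfl

lemma isRoot_charpoly_eigenvalueVec (A : Matrix (Fin N) (Fin N) K) (i : Fin N) :
    A.charpoly.IsRoot (eigenvalueVec A i) := by
  refine Polynomial.isRoot_of_mem_roots ?_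
  rw [← univ_map_eigenvalueVec]
  exact Multiset.mem_map_of_mem _ (mem_univ i)

end Eigenvalues

section SymmetricFunctions

variable {n R : Type*} [Fintype n]

/-- Evaluation of polynomial functions of a matrix. -/
def evalMatrix [CommRing R] (A : Matrix n n R) : MvPolynomial (n × n) R →ₐ[R] R :=
  aeval fun ij ↦ A ij.1 ij.2

lemma evalMatrix_tracePow [DecidableEq n] [CommRing R] (A : Matrix n n R) (k : ℕ) :
    evalMatrix A (tracePow n R k) = trace (A ^ k) := by
  have map_pow_eq := map_pow (evalMatrix A).mapMatrix (mvPolynomialX n n R) k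
  rw [evalMatrix, mvPolynomialX_mapMatrix_aeval, AlgHom.mapMatrix_apply] at map_pow_eq
  rw [← map_pow_eq, tracePow, evalMatrix, AddMonoidHom.map_trace]

lemma evalMatrix_traceHom [Field R] [IsAlgClosed R] {N : ℕ} (A : Matrix (Fin N) (Fin N) R)
    (q : MvPolynomial ℕ R) :
    evalMatrix A (traceHom (Fin N) R q) = aeval (eigenvalueVec A) (psumHom (Fin N) R q) := by
  have h : (evalMatrix A).comp (traceHom (Fin N) R) =
      (aeval (eigenvalueVec A)).comp (psumHom (Fin N) R) := by
    refine MvPolynomial.algHom_ext fun k ↦ ?_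
    rw [AlgHom.comp_apply, AlgHom.comp_apply, traceHom_X, psumHom_X, evalMatrix_tracePow,
      trace_pow_eq_sum_roots_charpoly, ← univ_map_eigenvalueVec, Multiset.map_map]
    simp [psum, List.sum_ofFn]
  exact DFunLike.congr_fun h q

lemma esymm_mem_range_psumHom [Field R] [CharZero R] (k : ℕ) :
    esymm n R k ∈ (psumHom n R).range := by
  induction k using Nat.strong_induction_on with
  | _ k ih =>
    rcases eq_or_ne k 0 with rfl | hk
    · rw [esymm_zero]
      exact one_mem _
    have newton : (k : R) • esymm n R k = (-1) ^ (k + 1) * ∑ a ∈ antidiagonal k with a.1 < k,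
        (-1) ^ a.1 * esymm n R a.1 * psum n R a.2 := by
      rw [← mul_esymm_eq_sum, MvPolynomial.smul_eq_C_mul, map_natCast]
    have neg_one_mem : (-1 : MvPolynomial n R) ∈ (psumHom n R).range := neg_mem (one_mem _)
    rw [← inv_smul_smul₀ (Nat.cast_ne_zero (R := R).2 hk) (esymm n R k), newton]
    exact Subalgebra.smul_mem _ (mul_mem (pow_mem neg_one_mem _) (sum_mem fun a ha ↦
      mul_mem (mul_mem (pow_mem neg_one_mem _) (ih _ (mem_filter.1 ha).2))
        ⟨X a.2, psumHom_X _⟩)) _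

theorem exists_psumHom_eq [Field R] [CharZero R] {f : MvPolynomial n R} (hf : f.IsSymmetric) :
    ∃ q, psumHom n R q = f := by
  obtain ⟨q, hq⟩ := esymmAlgHom_surjective (σ := n) (R := R) le_rfl ⟨f, hf⟩
  have f_eq : f = aeval (fun i : Fin (Fintype.card n) ↦ esymm n R (i + 1)) q := by
    rw [← esymmAlgHom_apply, hq]
  have range_le : (aeval fun i : Fin (Fintype.card n) ↦ esymm n R (i + 1)).range ≤
      (psumHom n R).range := by
    rw [aeval_range, Algebra.adjoin_le_iff]
    rintro _ ⟨i, rfl⟩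
    exact esymm_mem_range_psumHom _
  exact range_le ⟨q, f_eq.symm⟩

end SymmetricFunctions

section InfinitesimalInvariance

variable {n R : Type*} [Fintype n] [CommRing R]

/-- The substitution `x ↦ g x` in polynomial functions of a matrix. -/
def leftTranslate (g : Matrix n n R) : MvPolynomial (n × n) R →ₐ[R] MvPolynomial (n × n) R :=
  aeval fun ij ↦ ∑ k, g ij.1 k • X (k, ij.2)

lemma evalMatrix_leftTranslate (g A : Matrix n n R) (P : MvPolynomial (n × n) R) :
    evalMatrix A (leftTranslate g P) = evalMatrix (g * A) P := by
  have h : (evalMatrix A).comp (leftTranslate g) = evalMatrix (g * A) :=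
    MvPolynomial.algHom_ext fun ij ↦ by simp [evalMatrix, leftTranslate, mul_apply]
  exact DFunLike.congr_fun h P

/-- The polynomial curve `T ↦ P((1 + (T - 1) Q) x)` of polynomial functions. -/
def translationCurve (Q : Matrix n n R) :
    MvPolynomial (n × n) R →ₐ[R] Polynomial (MvPolynomial (n × n) R) :=
  aeval fun ij ↦ Polynomial.C (X ij) +
    (Polynomial.X - 1) * Polynomial.C (∑ k, Q ij.1 k • X (k, ij.2))

lemma eval_one_translationCurve (Q : Matrix n n R) (P : MvPolynomial (n × n) R) :
    (translationCurve Q P).eval 1 = P := by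
  have h : ((Polynomial.aeval (R := MvPolynomial (n × n) R) 1).restrictScalars R).comp
      (translationCurve Q) = AlgHom.id R _ :=
    MvPolynomial.algHom_ext fun ij ↦ by simp [translationCurve]
  exact DFunLike.congr_fun h P

variable [DecidableEq n]

lemma eval_translationCurve (Q : Matrix n n R) (t : R) (P : MvPolynomial (n × n) R) :
    (translationCurve Q P).eval (C t) = leftTranslate (1 + (t - 1) • Q) P := by
  have h : ((Polynomial.aeval (R := MvPolynomial (n × n) R) (C t)).restrictScalars R).comp
      (translationCurve Q) = leftTranslate (1 + (t - 1) • Q) :=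
    MvPolynomial.algHom_ext fun ij ↦ by
      simp [translationCurve, leftTranslate, Matrix.one_apply, add_smul, sum_add_distrib,
        MvPolynomial.smul_eq_C_mul, mul_sum, mul_assoc, Polynomial.eval_finsetSum]
  exact DFunLike.congr_fun h P

lemma eval_derivative_translationCurve (Q : Matrix n n R) (P : MvPolynomial (n × n) R) :
    (translationCurve Q P).derivative.eval 1 = ∑ a, ∑ b, Q a b • translationDeriv a b P := by
  induction P using MvPolynomial.induction_on with
  | C c => simp [← algebraMap_eq, translationCurve]
  | add p q hp hq => simp only [map_add, Polynomial.eval_add, hp, hq, smul_add, sum_add_distrib]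
  | mul_X p ij hp =>
    have deriv_X : (translationCurve Q (X ij)).derivative.eval 1 =
        ∑ a, ∑ b, Q a b • translationDeriv a b (X ij) := by
      simp [translationCurve, translationDeriv, mkDerivation_X, Polynomial.eval_finsetSum]
    simp only [map_mul, Polynomial.derivative_mul, Polynomial.eval_add, Polynomial.eval_mul, hp,
      eval_one_translationCurve, deriv_X, Derivation.leibniz, smul_eq_mul, smul_add,
      sum_add_distrib, sum_mul, mul_sum, smul_mul_assoc, mul_smul_comm, mul_comm (X ij)]
    exact add_comm _ _

lemma exists_eval_eq_apply_eval {A : Type*} [CommRing A] [Algebra R A] (ℓ : A →ₗ[R] R)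
    (p : Polynomial A) :
    ∃ q : Polynomial R, (∀ t, q.eval t = ℓ (p.eval (algebraMap R A t))) ∧
      q.derivative.eval 1 = ℓ (p.derivative.eval 1) := by
  induction p using Polynomial.induction_on' with
  | add p₁ p₂ h₁ h₂ =>
    obtain ⟨q₁, hq₁, hq₁'⟩ := h₁
    obtain ⟨q₂, hq₂, hq₂'⟩ := h₂
    exact ⟨q₁ + q₂, fun t ↦ by simp only [Polynomial.eval_add, map_add, hq₁, hq₂],
      by simp only [Polynomial.eval_add, map_add, hq₁', hq₂']⟩
  | monomial k a =>
    refine ⟨Polynomial.monomial k (ℓ a), fun t ↦ ?_, ?_⟩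
    · rw [Polynomial.eval_monomial, Polynomial.eval_monomial, ← map_pow, mul_comm a,
        ← Algebra.smul_def, map_smul, smul_eq_mul, mul_comm]
    · simp only [Polynomial.derivative_monomial, Polynomial.eval_monomial, one_pow, mul_one]
      rw [← nsmul_eq_mul', ← nsmul_eq_mul', map_nsmul]

/-- The equivariance is polynomial in `t`, so it holds identically and can be differentiated at
`t = 1`. -/
theorem sum_mul_apply_translationDeriv [IsDomain R] {ℓ : MvPolynomial (n × n) R →ₗ[R] R}
    {m : ℕ} {Q : Matrix n n R} {S : Set R} (hS : S.Infinite)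
    {P : MvPolynomial (n × n) R}
    (h : ∀ t ∈ S, ℓ (leftTranslate (1 + (t - 1) • Q) P) = t ^ m * ℓ P) :
    ∑ a, ∑ b, Q a b * ℓ (translationDeriv a b P) = m * ℓ P := by
  obtain ⟨q, eval_q, derivative_q⟩ := exists_eval_eq_apply_eval ℓ (translationCurve Q P)
  have q_eq : q = Polynomial.C (ℓ P) * Polynomial.X ^ m := by
    refine Polynomial.eq_of_infinite_eval_eq _ _ (hS.mono fun t ht ↦ ?_)
    change q.eval t = _
    rw [eval_q, algebraMap_eq, eval_translationCurve, h t ht, Polynomial.eval_mul,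
      Polynomial.eval_C, Polynomial.eval_pow, Polynomial.eval_X, mul_comm]
  rw [q_eq, eval_derivative_translationCurve, Polynomial.derivative_C_mul_X_pow] at derivative_q
  simpa [mul_comm] using derivative_q.symm

end InfinitesimalInvariance

section LineProjections

variable {n : Type*} [Fintype n]

/-- The orthogonal projection of `ℂⁿ` onto the line spanned by `w`; it is `0` when `w = 0`. -/
def lineProj (w : n → ℂ) : Matrix n n ℂ := (star w ⬝ᵥ w)⁻¹ • vecMulVec w (star w)

lemma lineProj_apply (w : n → ℂ) (a b : n) :
    lineProj w a b = (star w ⬝ᵥ w)⁻¹ * (w a * star (w b)) := rfl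

open scoped ComplexOrder in
lemma star_dotProduct_self_ne_zero {w : n → ℂ} (hw : w ≠ 0) : star w ⬝ᵥ w ≠ 0 :=
  dotProduct_star_self_eq_zero.not.2 hw

lemma isHermitian_lineProj (w : n → ℂ) : (lineProj w).IsHermitian := by
  ext a b
  simp [lineProj_apply, dotProduct, mul_comm]

lemma lineProj_mul_lineProj {w : n → ℂ} (hw : w ≠ 0) : lineProj w * lineProj w = lineProj w := by
  rw [lineProj, smul_mul_smul_comm, vecMulVec_mul_vecMulVec, vecMulVec_smul, smul_smul, mul_assoc,
    inv_mul_cancel₀ (star_dotProduct_self_ne_zero hw), mul_one]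

lemma eq_zero_of_star_dotProduct_mulVec {M : Matrix n n ℂ}
    (h : ∀ w, star w ⬝ᵥ M *ᵥ w = 0) : M = 0 := by
  classical
  rw [← (toEuclideanLin (𝕜 := ℂ)).map_eq_zero_iff, ← inner_map_self_eq_zero]
  intro x
  rw [← inner_conj_symm, EuclideanSpace.inner_eq_star_dotProduct, dotProduct_comm]
  simpa using h x.ofLp

variable [DecidableEq n]

lemma one_add_smul_lineProj_mem_unitaryGroup {w : n → ℂ} (hw : w ≠ 0) {t : ℂ} (ht : ‖t‖ = 1) :
    1 + (t - 1) • lineProj w ∈ unitaryGroup n ℂ := by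
  have norm_sq : t * star t = 1 := by simp [Complex.mul_conj, Complex.normSq_eq_norm_sq, ht]
  rw [mem_unitaryGroup_iff, star_add, star_smul, star_eq_conjTranspose (lineProj w),
    isHermitian_lineProj, star_one, add_mul, mul_add, mul_add, smul_mul_smul_comm,
    lineProj_mul_lineProj hw, one_mul, one_mul, mul_one, star_sub, star_one, add_assoc, ← add_smul,
    ← add_smul, show star t - 1 + (t - 1 + (t - 1) * (star t - 1)) = 0 by
      linear_combination norm_sq, zero_smul, add_zero]

lemma det_one_add_smul_lineProj {w : n → ℂ} (hw : w ≠ 0) (t : ℂ) :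
    (1 + (t - 1) • lineProj w).det = t := by
  rw [lineProj, smul_smul, ← smul_vecMulVec, vecMulVec_eq Unit,
    det_one_add_replicateCol_mul_replicateRow, dotProduct_smul, smul_eq_mul, mul_assoc,
    inv_mul_cancel₀ (star_dotProduct_self_ne_zero hw)]
  ring

end LineProjections

section WeylIntegration

instance {n : Type*} [Fintype n] [DecidableEq n] : CompactSpace (unitaryGroup n ℂ) := by
  have entries_compact : IsCompact
      (Set.univ.pi fun _ : n ↦ Set.univ.pi fun _ : n ↦ Metric.closedBall (0 : ℂ) 1) :=
    isCompact_univ_pi fun _ ↦ isCompact_univ_pi fun _ ↦ isCompact_closedBall 0 1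
  have isClosed : IsClosed (unitaryGroup n ℂ : Set (Matrix n n ℂ)) := by
    rw [show (unitaryGroup n ℂ : Set (Matrix n n ℂ)) = {A | A * star A = 1} from
      Set.ext fun A ↦ mem_unitaryGroup_iff]
    exact isClosed_eq (by fun_prop) (by fun_prop)
  exact isCompact_iff_compactSpace.1 <| entries_compact.of_isClosed_subset isClosed
    fun A hA i _ j _ ↦ by simpa using entry_norm_bound_of_unitary hA i j

lemma star_det_mul_det {n : Type*} [Fintype n] [DecidableEq n] (U : unitaryGroup n ℂ) :
    star U.1.det * U.1.det = 1 := by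
  have h := congrArg det (mem_unitaryGroup_iff'.1 U.2)
  rwa [det_mul, star_eq_conjTranspose, det_conjTranspose, det_one] at h

variable {N : ℕ}

open scoped Matrix.Norms.L2Operator in
lemma norm_eigenvalueVec (U : unitaryGroup (Fin N) ℂ) (i : Fin N) : ‖eigenvalueVec U.1 i‖ = 1 :=
  spectrum.norm_eq_one_of_unitary (𝕜 := ℂ) U.2
    (mem_spectrum_iff_isRoot_charpoly.2 (isRoot_charpoly_eigenvalueVec U.1 i))

lemma continuous_evalMatrix (P : MvPolynomial (Fin N × Fin N) ℂ) :
    Continuous fun U : unitaryGroup (Fin N) ℂ ↦ evalMatrix U.1 P :=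
  P.continuous_eval.comp (continuous_pi fun ij ↦ continuous_subtype_val.matrix_elem ij.1 ij.2)

lemma infinite_setOf_norm_eq_one : {t : ℂ | ‖t‖ = 1}.Infinite := by
  have sphere_eq : {t : ℂ | ‖t‖ = 1} = Metric.sphere 0 1 := by ext; simp
  rw [sphere_eq]
  refine (isPreconnected_sphere (by simp) 0 1).infinite_of_nontrivial ⟨1, by simp, -1, by simp, ?_⟩
  norm_num [Complex.ext_iff]

variable {ℙ : Measure (unitaryGroup (Fin N) ℂ)} [IsProbabilityMeasure ℙ]

lemma integrable_of_continuous {f : unitaryGroup (Fin N) ℂ → ℂ} (hf : Continuous f) :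
    Integrable f ℙ :=
  hf.integrable_of_hasCompactSupport (HasCompactSupport.of_compactSpace f)

lemma integrable_star_det_pow_mul_evalMatrix (m : ℕ) (P : MvPolynomial (Fin N × Fin N) ℂ) :
    Integrable (fun U ↦ star U.1.det ^ m * evalMatrix U.1 P) ℙ :=
  integrable_of_continuous (((by fun_prop : Continuous fun U : unitaryGroup (Fin N) ℂ ↦
    star U.1.det).pow m).mul (continuous_evalMatrix P))

variable (ℙ) in
/-- Integration of polynomial functions over the unitary group against the weight `(det U)⁻ᵐ`. -/
def haarFunctional (m : ℕ) : MvPolynomial (Fin N × Fin N) ℂ →ₗ[ℂ] ℂ where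
  toFun P := ∫ U, star U.1.det ^ m * evalMatrix U.1 P ∂ℙ
  map_add' P Q := by
    simp only [map_add, mul_add]
    exact integral_add (integrable_star_det_pow_mul_evalMatrix m P)
      (integrable_star_det_pow_mul_evalMatrix m Q)
  map_smul' c P := by
    simp only [map_smul, smul_eq_mul, RingHom.id_apply, mul_left_comm _ c, integral_const_mul]

lemma haarFunctional_apply (m : ℕ) (P : MvPolynomial (Fin N × Fin N) ℂ) :
    haarFunctional ℙ m P = ∫ U, star U.1.det ^ m * evalMatrix U.1 P ∂ℙ := rfl

variable [ℙ.IsMulLeftInvariant]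

lemma haarFunctional_leftTranslate (m : ℕ) (V : unitaryGroup (Fin N) ℂ)
    (P : MvPolynomial (Fin N × Fin N) ℂ) :
    haarFunctional ℙ m (leftTranslate V.1 P) = V.1.det ^ m * haarFunctional ℙ m P := by
  rw [haarFunctional_apply, haarFunctional_apply,
    ← integral_mul_left_eq_self (fun U ↦ star U.1.det ^ m * evalMatrix U.1 P) V,
    ← integral_const_mul]
  refine integral_congr_ae (ae_of_all _ fun U ↦ ?_)
  have cancel : V.1.det ^ m * star V.1.det ^ m = 1 := by
    rw [← mul_pow, mul_comm, star_det_mul_det, one_pow]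
  change star U.1.det ^ m * evalMatrix U.1 (leftTranslate V.1 P) =
    V.1.det ^ m * (star (V.1 * U.1).det ^ m * evalMatrix (V.1 * U.1) P)
  rw [evalMatrix_leftTranslate, det_mul, star_mul, mul_pow]
  linear_combination (-star U.1.det ^ m * evalMatrix (V.1 * U.1) P) * cancel

lemma sum_mul_haarFunctional_translationDeriv (m : ℕ) (P : MvPolynomial (Fin N × Fin N) ℂ)
    (w : Fin N → ℂ) :
    ∑ a, ∑ b, w a * star (w b) * haarFunctional ℙ m (translationDeriv a b P) =
      (star w ⬝ᵥ w) * (m * haarFunctional ℙ m P) := by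
  rcases eq_or_ne w 0 with rfl | hw
  · simp
  rw [← sum_mul_apply_translationDeriv (Q := lineProj w) infinite_setOf_norm_eq_one fun t ht ↦ by
    simpa only [det_one_add_smul_lineProj hw] using
      haarFunctional_leftTranslate m ⟨_, one_add_smul_lineProj_mem_unitaryGroup hw ht⟩ P]
  simp only [lineProj_apply, mul_sum, mul_assoc,
    mul_inv_cancel_left₀ (star_dotProduct_self_ne_zero hw)]

/-- Both sides of the semi-invariance relation are sesquilinear in `w` once contracted with
`w a * star (w b)`, so the diagonal case of the previous lemma suffices. -/
theorem isSemiInvariant_haarFunctional (m : ℕ) : IsSemiInvariant m (haarFunctional ℙ m) := by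
  intro a b P
  let M : Matrix (Fin N) (Fin N) ℂ :=
    of (fun b a ↦ haarFunctional ℙ m (translationDeriv a b P)) - (m * haarFunctional ℙ m P) • 1
  have M_eq_zero : M = 0 := eq_zero_of_star_dotProduct_mulVec fun w ↦ by
    rw [sub_mulVec, dotProduct_sub, smul_mulVec, one_mulVec, dotProduct_smul, smul_eq_mul,
      mul_comm (_ * _), ← sum_mul_haarFunctional_translationDeriv, sub_eq_zero, sum_comm]
    simp only [dotProduct, mulVec, of_apply, Pi.star_apply, mul_sum]
    exact sum_congr rfl fun b _ ↦ sum_congr rfl fun a _ ↦ by ring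
  have entry := congrFun₂ M_eq_zero b a
  simpa [M, one_apply, sub_eq_zero, eq_comm (a := b)] using entry

/-- The polynomial form of Weyl's integration formula. -/
theorem integral_star_det_pow_mul_aeval_eigenvalueVec (m : ℕ) {f : MvPolynomial (Fin N) ℂ}
    (hf : f.IsSymmetric) :
    ∫ U, star U.1.det ^ m * aeval (eigenvalueVec U.1) f ∂ℙ =
      coeff (staircase N m) (f * vandermondePoly N ℂ) := by
  obtain ⟨q, rfl⟩ := exists_psumHom_eq hf
  obtain ⟨q₀, hq₀⟩ := exists_psumHom_eq (R := ℂ) (n := Fin N) (f := ∏ i, X i ^ m) fun ϖ ↦ by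
    simp only [map_prod, map_pow, rename_X]
    exact Equiv.prod_comp ϖ fun i ↦ (X i : MvPolynomial (Fin N) ℂ) ^ m
  have h_ker (q : MvPolynomial ℕ ℂ) (hq : psumHom (Fin N) ℂ q = 0) :
      haarFunctional ℙ m (traceHom (Fin N) ℂ q) = 0 := by
    simp [haarFunctional_apply, evalMatrix_traceHom, hq]
  have normalization : haarFunctional ℙ m (traceHom (Fin N) ℂ q₀) = 1 := by
    simp only [haarFunctional_apply, evalMatrix_traceHom, hq₀, map_prod, map_pow, aeval_X, prod_pow,
      ← det_eq_prod_eigenvalueVec, ← mul_pow, star_det_mul_det, one_pow, integral_const,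
      probReal_univ, one_smul]
  have h := (isSemiInvariant_haarFunctional m).apply_traceHom h_ker (q₀ := q₀)
    (by rw [hq₀, coeff_staircase_prod_X_pow_mul_vandermondePoly]) q
  rw [normalization, mul_one, haarFunctional_apply] at h
  simpa only [evalMatrix_traceHom] using h

end WeylIntegration

section CoefficientExtraction

variable {σ R : Type*} [Fintype σ] [CommRing R]

lemma prod_C_mul_X_pow (a : σ → R) (α : σ → ℕ) :
    ∏ i, C (a i) * X i ^ α i = monomial (Finsupp.equivFunOnFinite.symm α) (∏ i, a i) := by
  rw [monomial_eq, Finsupp.prod_fintype _ _ (by simp), prod_mul_distrib, map_prod]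
  rfl

lemma coeff_prod_aeval_X (α : σ →₀ ℕ) (p : σ → Polynomial R) :
    coeff α (∏ i, Polynomial.aeval (X i) (p i)) = ∏ i, (p i).coeff (α i) := by
  classical
  have expand (i : σ) : Polynomial.aeval (X i) (p i) =
      ∑ k ∈ (p i).support, C ((p i).coeff k) * (X i : MvPolynomial σ R) ^ k := by
    rw [Polynomial.aeval_def, Polynomial.eval₂_eq_sum, Polynomial.sum, algebraMap_eq]
  have index_eq (φ : σ → ℕ) : Finsupp.equivFunOnFinite.symm φ = α ↔ φ = ⇑α :=
    Equiv.symm_apply_eq _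
  simp only [expand, prod_univ_sum, coeff_sum, prod_C_mul_X_pow, coeff_monomial, index_eq,
    sum_ite_eq', Fintype.mem_piFinset, Polynomial.mem_support_iff]
  refine ite_eq_left_iff.2 fun h ↦ ?_
  obtain ⟨i, hi⟩ := not_forall.1 h
  exact (prod_eq_zero (mem_univ i) (not_not.1 hi)).symm

/-- Expanding the Vandermonde determinant, each term separates into one-variable coefficients. -/
lemma coeff_staircase_prod_aeval_X_mul_vandermondePoly {N : ℕ} (m : ℕ) (g : Polynomial R) :
    coeff (staircase N m) ((∏ i, Polynomial.aeval (X i) g) * vandermondePoly N R) =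
      (of fun i j : Fin N ↦ (Polynomial.X ^ (j : ℕ) * g).coeff (m + i)).det := by
  rw [vandermondePoly, ← det_transpose, det_apply, det_apply, mul_sum, coeff_sum,
    ← Equiv.sum_comp (Equiv.inv (Equiv.Perm (Fin N)))]
  refine sum_congr rfl fun ϖ _ ↦ ?_
  have separate : (∏ i, Polynomial.aeval (X i : MvPolynomial (Fin N) R) g) *
      ∏ i, (vandermonde fun i : Fin N ↦ (X i : MvPolynomial (Fin N) R))ᵀ (ϖ⁻¹ i) i =
        ∏ i, Polynomial.aeval (X i) (Polynomial.X ^ (ϖ⁻¹ i : ℕ) * g) := by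
    rw [← prod_mul_distrib]
    exact prod_congr rfl fun i _ ↦ by simp [vandermonde_apply, mul_comm]
  rw [Equiv.inv_apply, Equiv.Perm.sign_inv, mul_smul_comm, separate, Units.smul_def, Units.smul_def,
    coeff_smul, coeff_prod_aeval_X, ← Equiv.prod_comp ϖ]
  simp [staircase_apply]

end CoefficientExtraction

section TrigonometricPolynomials

variable {T : ℝ}

variable (T) in
/-- The trigonometric polynomial `∑ₙ cₙ e^{2πinx/T}`. -/
def trigPoly : (ℤ →₀ ℂ) →ₗ[ℂ] C(AddCircle T, ℂ) := Finsupp.linearCombination ℂ fourier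

lemma trigPoly_apply (c : ℤ →₀ ℂ) (x : AddCircle T) :
    trigPoly T c x = ∑ n ∈ c.support, c n * fourier n x := by
  simp [trigPoly, Finsupp.linearCombination_apply, Finsupp.sum]

variable [Fact (0 < T)]

lemma fourierCoeff_trigPoly (c : ℤ →₀ ℂ) (n : ℤ) : fourierCoeff (trigPoly T c) n = c n := by
  have trigPoly_eq : ⇑(trigPoly T c) = ∑ k ∈ c.support, c k • ⇑(fourier k) := by
    ext x
    simp [trigPoly_apply]
  have integrable (f : C(AddCircle T, ℂ)) : Integrable f AddCircle.haarAddCircle :=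
    f.continuous.integrable_of_hasCompactSupport (HasCompactSupport.of_compactSpace _)
  rw [trigPoly_eq, fourierCoeff.sum _ _ fun k _ ↦ (integrable (fourier k)).smul (c k),
    Finset.sum_apply]
  simp only [fourierCoeff.const_smul, fourierCoeff_fourier, Pi.single_apply, smul_eq_mul, mul_ite,
    mul_one, mul_zero, sum_ite_eq, Finsupp.mem_support_iff, ite_not]
  exact ite_eq_right_iff.2 Eq.symm

lemma exists_tendsto_trigPoly (f : C(AddCircle T, ℂ)) :
    ∃ c : ℕ → ℤ →₀ ℂ, Tendsto (fun k ↦ trigPoly T (c k)) atTop (nhds f) := by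
  have h : f ∈ (Submodule.span ℂ (Set.range (@fourier T))).topologicalClosure := by
    rw [span_fourier_closure_eq_top]
    trivial
  rw [← SetLike.mem_coe, Submodule.topologicalClosure_coe, mem_closure_iff_seq_limit] at h
  obtain ⟨u, u_mem, hu⟩ := h
  choose c hc using fun k ↦ Finsupp.mem_span_range_iff_exists_finsupp.1 (u_mem k)
  exact ⟨c, hu.congr fun k ↦ (hc k).symm⟩

/-- The polynomial `∑ₙ cₙ Xⁿ⁺ᵐ`, obtained from the Laurent polynomial `∑ₙ cₙ Xⁿ` by clearing
denominators; frequencies below `-m` are sent to the constant term. -/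
def shiftPoly (m : ℕ) (c : ℤ →₀ ℂ) : Polynomial ℂ :=
  ∑ n ∈ c.support, Polynomial.monomial (n + m).toNat (c n)

variable {m : ℕ} {c : ℤ →₀ ℂ}

lemma coeff_shiftPoly (hm : ∀ n ∈ c.support, -(m : ℤ) ≤ n) (k : ℕ) :
    (shiftPoly m c).coeff k = c (k - m) := by
  rw [shiftPoly, Polynomial.finsetSum_coeff, sum_eq_single ((k : ℤ) - m)]
  · simp
  · intro n hn hne
    have := hm n hn
    exact Polynomial.coeff_monomial_of_ne _ (by omega)
  · intro h
    simp [Finsupp.notMem_support_iff.1 h]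

lemma coeff_X_pow_mul_shiftPoly (hm : ∀ n ∈ c.support, -(m : ℤ) ≤ n) (i j : ℕ) :
    (Polynomial.X ^ j * shiftPoly m c).coeff (m + i) = c (i - j) := by
  rw [Polynomial.coeff_X_pow_mul']
  split_ifs with hij
  · rw [coeff_shiftPoly hm]
    congr 1
    omega
  · by_contra h
    have := hm _ (Finsupp.mem_support_iff.2 (Ne.symm h))
    omega

end TrigonometricPolynomials

section ClosedStepFunctions

/-- Linear combinations of indicator functions of closed sets. -/
def closedStep (X : Type*) [TopologicalSpace X] : Submodule ℂ (X → ℂ) :=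
  Submodule.span ℂ {f | ∃ K : Set X, IsClosed K ∧ f = K.indicator 1}

section TopologicalSpace

variable {X : Type*} [TopologicalSpace X] {K L : Set X}

lemma indicator_mem_closedStep (hK : IsClosed K) : K.indicator 1 ∈ closedStep X :=
  Submodule.subset_span ⟨K, hK, rfl⟩

lemma one_mem_closedStep : 1 ∈ closedStep X := by
  simpa using indicator_mem_closedStep (isClosed_univ (X := X))

lemma indicator_sdiff_mem_closedStep (hK : IsClosed K) (hL : IsClosed L) :
    (K \ L).indicator 1 ∈ closedStep X := by
  rw [← Set.sdiff_inter_self_eq_sdiff, Set.indicator_sdiff Set.inter_subset_right]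
  exact sub_mem (indicator_mem_closedStep hK) (indicator_mem_closedStep (hL.inter hK))

lemma measurableSet_of_indicator_mem_closedStep [MeasurableSpace X] [OpensMeasurableSpace X]
    {A : Set X} (hA : A.indicator 1 ∈ closedStep X) : MeasurableSet A := by
  have measurable_of_mem {F : X → ℂ} (hF : F ∈ closedStep X) : Measurable F := by
    induction hF using Submodule.span_induction with
    | mem F hF =>
      obtain ⟨K, hK, rfl⟩ := hF
      exact measurable_one.indicator hK.measurableSet
    | zero => exact measurable_zero
    | add F G _ _ hF hG => exact hF.add hG
    | smul c F _ hF => exact hF.const_smul c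
  exact (measurable_indicator_const_iff (1 : ℂ)).1 (measurable_of_mem hA)

end TopologicalSpace

lemma exists_tendsto_indicator {X : Type*} [PseudoEMetricSpace X] {K : Set X} (hK : IsClosed K) :
    ∃ F : ℕ → C(X, ℂ), (∀ n x, ‖F n x‖ ≤ 1) ∧
      ∀ x, Tendsto (fun n ↦ F n x) atTop (nhds (K.indicator 1 x)) := by
  have pos (n : ℕ) : (0 : ℝ) < 1 / (n + 1) := by positivity
  refine ⟨fun n ↦ ⟨fun x ↦ ((thickenedIndicator (pos n) K x : NNReal) : ℂ), by fun_prop⟩,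
    fun n x ↦ by simpa using thickenedIndicator_le_one (pos n) K x, fun x ↦ ?_⟩
  have lim := tendsto_pi_nhds.1 (thickenedIndicator_tendsto_indicator_closure pos
    tendsto_one_div_add_atTop_nhds_zero_nat K) x
  rw [hK.closure_eq] at lim
  have coe_indicator : ((K.indicator (fun _ ↦ 1) x : NNReal) : ℂ) = K.indicator 1 x := by
    by_cases hx : x ∈ K <;> simp [hx]
  rw [← coe_indicator]
  exact ((Complex.continuous_ofReal.comp NNReal.continuous_coe).tendsto _).comp lim

lemma exists_tendsto_of_mem_closedStep {X : Type*} [PseudoEMetricSpace X] {G : X → ℂ}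
    (hG : G ∈ closedStep X) :
    ∃ (F : ℕ → C(X, ℂ)) (B : ℝ), (∀ n x, ‖F n x‖ ≤ B) ∧
      ∀ x, Tendsto (fun n ↦ F n x) atTop (nhds (G x)) := by
  induction hG using Submodule.span_induction with
  | mem G hG =>
    obtain ⟨K, hK, rfl⟩ := hG
    obtain ⟨F, F_le, hF⟩ := exists_tendsto_indicator hK
    exact ⟨F, 1, F_le, hF⟩
  | zero => exact ⟨0, 0, by simp, by simp⟩
  | add G₁ G₂ _ _ h₁ h₂ =>
    obtain ⟨F₁, B₁, F₁_le, hF₁⟩ := h₁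
    obtain ⟨F₂, B₂, F₂_le, hF₂⟩ := h₂
    exact ⟨F₁ + F₂, B₁ + B₂, fun n x ↦ norm_add_le_of_le (F₁_le n x) (F₂_le n x),
      fun x ↦ (hF₁ x).add (hF₂ x)⟩
  | smul a G _ h =>
    obtain ⟨F, B, F_le, hF⟩ := h
    refine ⟨a • F, ‖a‖ * B, fun n x ↦ ?_, fun x ↦ (hF x).const_smul a⟩
    simpa [norm_smul] using mul_le_mul_of_nonneg_left (F_le n x) (norm_nonneg a)

/-- `P` is closed under bounded pointwise limits of continuous functions on the circle. -/
def ClosedUnderBoundedLimits {T : ℝ} (P : (AddCircle T → ℂ) → Prop) : Prop :=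
  ∀ (F : ℕ → C(AddCircle T, ℂ)) (G : AddCircle T → ℂ) (B : ℝ), (∀ n x, ‖F n x‖ ≤ B) →
    (∀ x, Tendsto (fun n ↦ F n x) atTop (nhds (G x))) → (∀ n, P (F n)) → P G

variable {T : ℝ} [Fact (0 < T)] {P : (AddCircle T → ℂ) → Prop}

theorem ClosedUnderBoundedLimits.of_continuous (limit : ClosedUnderBoundedLimits P)
    (trig : ∀ c, P (trigPoly T c)) (f : C(AddCircle T, ℂ)) : P f := by
  obtain ⟨c, hc⟩ := exists_tendsto_trigPoly f
  obtain ⟨B, hB⟩ := hc.norm.isBoundedUnder_le.bddAbove_range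
  exact limit (fun n ↦ trigPoly T (c n)) f B
    (fun n x ↦ ((trigPoly T (c n)).norm_coe_le_norm x).trans (hB ⟨n, rfl⟩))
    (fun x ↦ ((continuous_eval_const x).tendsto f).comp hc) fun n ↦ trig (c n)

theorem ClosedUnderBoundedLimits.of_mem_closedStep (limit : ClosedUnderBoundedLimits P)
    (trig : ∀ c, P (trigPoly T c)) {G : AddCircle T → ℂ} (hG : G ∈ closedStep (AddCircle T)) :
    P G := by
  obtain ⟨F, B, F_le, hF⟩ := exists_tendsto_of_mem_closedStep hG
  exact limit F G B F_le hF fun n ↦ limit.of_continuous trig (F n)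

end ClosedStepFunctions

section ToeplitzDeterminants

instance : Fact (0 < 2 * π) := ⟨two_pi_pos⟩

lemma fourier_arg {z : ℂ} (hz : ‖z‖ = 1) (n : ℤ) :
    fourier n ((z.arg : ℝ) : AddCircle (2 * π)) = z ^ n := by
  have polar : z = Complex.exp (z.arg * Complex.I) := by
    simpa [hz] using (Complex.norm_mul_exp_arg_mul_I z).symm
  conv_rhs => rw [polar]
  rw [fourier_coe_apply, ← Complex.exp_int_mul]
  congr 1
  push_cast
  field_simp

lemma trigPoly_arg {z : ℂ} (hz : ‖z‖ = 1) {m : ℕ} {c : ℤ →₀ ℂ}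
    (hm : ∀ n ∈ c.support, -(m : ℤ) ≤ n) :
    trigPoly (2 * π) c (z.arg : ℝ) = star z ^ m * (shiftPoly m c).eval z := by
  have hz₀ : z ≠ 0 := norm_ne_zero_iff.1 (by simp [hz])
  have star_eq : star z = z⁻¹ := (Complex.inv_eq_conj hz).symm
  rw [trigPoly_apply, shiftPoly, Polynomial.eval_finsetSum, mul_sum]
  refine sum_congr rfl fun n hn ↦ ?_
  have := hm n hn
  rw [fourier_arg hz, star_eq, Polynomial.eval_monomial, ← zpow_natCast z,
    Int.toNat_of_nonneg (by omega), zpow_add₀ hz₀, inv_pow, zpow_natCast]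
  field_simp

variable {N : ℕ}

/-- The Toeplitz matrix of size `N` with symbol `F`. -/
def toeplitz {T : ℝ} [Fact (0 < T)] (N : ℕ) (F : AddCircle T → ℂ) : Matrix (Fin N) (Fin N) ℂ :=
  of fun i j ↦ fourierCoeff F ((i : ℤ) - j)

/-- The multiplicative statistic `∏ F(θ_j)` of the eigenvalue angles `θ_j` of `U`. -/
def multStat (F : AddCircle (2 * π) → ℂ) (U : unitaryGroup (Fin N) ℂ) : ℂ :=
  ∏ i, F ((eigenvalueVec U.1 i).arg : ℝ)

lemma isSymmetric_prod_aeval_X (g : Polynomial ℂ) :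
    (∏ i, Polynomial.aeval (X i : MvPolynomial (Fin N) ℂ) g).IsSymmetric := fun ϖ ↦ by
  simp only [map_prod, ← Polynomial.aeval_algHom_apply, rename_X]
  exact Equiv.prod_comp ϖ fun i ↦ Polynomial.aeval (X i : MvPolynomial (Fin N) ℂ) g

lemma multStat_trigPoly {m : ℕ} {c : ℤ →₀ ℂ} (hm : ∀ n ∈ c.support, -(m : ℤ) ≤ n)
    (U : unitaryGroup (Fin N) ℂ) :
    multStat (trigPoly (2 * π) c) U = star U.1.det ^ m * aeval (eigenvalueVec U.1)
      (∏ i, Polynomial.aeval (X i : MvPolynomial (Fin N) ℂ) (shiftPoly m c)) := by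
  rw [det_eq_prod_eigenvalueVec, map_prod, star_prod, ← prod_pow, ← prod_mul_distrib]
  refine prod_congr rfl fun i _ ↦ ?_
  rw [trigPoly_arg (norm_eigenvalueVec U i) hm, ← Polynomial.aeval_algHom_apply, aeval_X,
    Polynomial.coe_aeval_eq_eval]

lemma exists_forall_support_neg_le (c : ℤ →₀ ℂ) : ∃ m : ℕ, ∀ n ∈ c.support, -(m : ℤ) ≤ n :=
  ⟨c.support.sup Int.natAbs, fun n hn ↦ by
    have := le_sup (f := Int.natAbs) hn
    omega⟩

lemma measurable_multStat_trigPoly (c : ℤ →₀ ℂ) :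
    Measurable (multStat (N := N) (trigPoly (2 * π) c)) := by
  obtain ⟨m, hm⟩ := exists_forall_support_neg_le c
  obtain ⟨q, hq⟩ := exists_psumHom_eq (isSymmetric_prod_aeval_X (N := N) (shiftPoly m c))
  have stat_eq : multStat (trigPoly (2 * π) c) = fun U : unitaryGroup (Fin N) ℂ ↦
      star U.1.det ^ m * evalMatrix U.1 (traceHom (Fin N) ℂ q) := by
    ext U
    rw [multStat_trigPoly hm, evalMatrix_traceHom, hq]
  rw [stat_eq]
  exact (((by fun_prop : Continuous fun U : unitaryGroup (Fin N) ℂ ↦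
    star U.1.det).pow m).mul (continuous_evalMatrix _)).measurable

lemma tendsto_multStat {F : ℕ → AddCircle (2 * π) → ℂ} {G : AddCircle (2 * π) → ℂ}
    (h : ∀ x, Tendsto (fun n ↦ F n x) atTop (nhds (G x))) (U : unitaryGroup (Fin N) ℂ) :
    Tendsto (fun n ↦ multStat (F n) U) atTop (nhds (multStat G U)) :=
  tendsto_finsetProd _ fun _ _ ↦ h _

lemma norm_multStat_le {F : AddCircle (2 * π) → ℂ} {B : ℝ} (hF : ∀ x, ‖F x‖ ≤ B)
    (U : unitaryGroup (Fin N) ℂ) : ‖multStat F U‖ ≤ B ^ N := by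
  rw [multStat, norm_prod]
  simpa using prod_le_prod (s := univ) (fun i _ ↦ norm_nonneg _) fun (i : Fin N) _ ↦
    hF ((eigenvalueVec U.1 i).arg : ℝ)

variable (N) in
lemma closedUnderBoundedLimits_measurable_multStat :
    ClosedUnderBoundedLimits fun F ↦ Measurable (multStat (N := N) F) :=
  fun _ _ _ _ h hF ↦ measurable_of_tendsto_metrizable hF (tendsto_pi_nhds.2 (tendsto_multStat h))

theorem measurable_multStat {F : AddCircle (2 * π) → ℂ}
    (hF : F ∈ closedStep (AddCircle (2 * π))) : Measurable (multStat (N := N) F) :=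
  (closedUnderBoundedLimits_measurable_multStat N).of_mem_closedStep measurable_multStat_trigPoly hF

lemma tendsto_det_toeplitz {T : ℝ} [Fact (0 < T)] {F : ℕ → C(AddCircle T, ℂ)}
    {G : AddCircle T → ℂ} {B : ℝ} (F_le : ∀ n x, ‖F n x‖ ≤ B)
    (h : ∀ x, Tendsto (fun n ↦ F n x) atTop (nhds (G x))) :
    Tendsto (fun n ↦ (toeplitz N (F n)).det) atTop (nhds (toeplitz N G).det) := by
  have continuous_det : Continuous (det : Matrix (Fin N) (Fin N) ℂ → ℂ) := by fun_prop
  refine (continuous_det.tendsto _).comp (tendsto_pi_nhds.2 fun i ↦ tendsto_pi_nhds.2 fun j ↦ ?_)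
  refine tendsto_integral_of_dominated_convergence (fun _ ↦ B)
    (fun n ↦ ((fourier _).continuous.smul (F n).continuous).aestronglyMeasurable)
    (integrable_const _) (fun n ↦ ae_of_all _ fun x ↦ ?_) (ae_of_all _ fun x ↦ (h x).const_smul _)
  rw [norm_smul, fourier_apply, Circle.norm_coe, one_mul]
  exact F_le n x

variable {ℙ : Measure (unitaryGroup (Fin N) ℂ)} [IsProbabilityMeasure ℙ] [ℙ.IsMulLeftInvariant]

lemma integral_multStat_trigPoly (c : ℤ →₀ ℂ) :
    ∫ U, multStat (trigPoly (2 * π) c) U ∂ℙ = (toeplitz N (trigPoly (2 * π) c)).det := by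
  obtain ⟨m, hm⟩ := exists_forall_support_neg_le c
  simp only [multStat_trigPoly hm]
  rw [integral_star_det_pow_mul_aeval_eigenvalueVec m (isSymmetric_prod_aeval_X _),
    coeff_staircase_prod_aeval_X_mul_vandermondePoly]
  simp only [coeff_X_pow_mul_shiftPoly hm, toeplitz, fourierCoeff_trigPoly]

omit [ℙ.IsMulLeftInvariant] in
lemma closedUnderBoundedLimits_integral_multStat :
    ClosedUnderBoundedLimits fun F ↦ ∫ U, multStat F U ∂ℙ = (toeplitz N F).det := by
  intro F G B F_le h hF
  have measurable (n : ℕ) : Measurable (multStat (N := N) (F n)) :=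
    (closedUnderBoundedLimits_measurable_multStat N).of_continuous measurable_multStat_trigPoly _
  have lim : Tendsto (fun n ↦ ∫ U, multStat (F n) U ∂ℙ) atTop (nhds (∫ U, multStat G U ∂ℙ)) :=
    tendsto_integral_of_dominated_convergence (fun _ ↦ B ^ N)
      (fun n ↦ (measurable n).aestronglyMeasurable) (integrable_const _)
      (fun n ↦ ae_of_all _ (norm_multStat_le (F_le n))) (ae_of_all _ (tendsto_multStat h))
  simp only [hF] at lim
  exact tendsto_nhds_unique lim (tendsto_det_toeplitz F_le h)

/-- The Heine–Szegő identity. -/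
theorem integral_multStat {F : AddCircle (2 * π) → ℂ} (hF : F ∈ closedStep (AddCircle (2 * π))) :
    ∫ U, multStat F U ∂ℙ = (toeplitz N F).det :=
  closedUnderBoundedLimits_integral_multStat.of_mem_closedStep integral_multStat_trigPoly hF

end ToeplitzDeterminants

section DeterminantInequalities

open scoped ComplexOrder

variable {n 𝕜 : Type*} [Fintype n] [DecidableEq n] [RCLike 𝕜] {A B M T : Matrix n n 𝕜}

lemma det_one_add_smul_eq_prod_eigenvalues (hT : T.IsHermitian) (c : 𝕜) :
    (1 + c • T).det = ∏ i, (1 + c * (hT.eigenvalues i : 𝕜)) := by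
  set V := hT.eigenvectorUnitary
  set D : Matrix n n 𝕜 := diagonal (RCLike.ofReal ∘ hT.eigenvalues)
  have diagonalization : T = V.1 * D * star V.1 := hT.spectral_theorem
  calc (1 + c • T).det = (1 + (c • (V.1 * D)) * star V.1).det := by
        conv_lhs => rw [diagonalization, ← Matrix.smul_mul]
    _ = (1 + c • D).det := by
        rw [det_one_add_mul_comm, Matrix.mul_smul, ← Matrix.mul_assoc, Unitary.coe_star_mul_self,
          Matrix.one_mul]
    _ = _ := by
        rw [← diagonal_one, ← diagonal_smul, diagonal_add, det_diagonal]
        rfl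

lemma trace_mul_self_eq_sum_eigenvalues (hT : T.IsHermitian) :
    (T * T).trace = ∑ i, (hT.eigenvalues i : 𝕜) ^ 2 := by
  set V := hT.eigenvectorUnitary
  set D : Matrix n n 𝕜 := diagonal (RCLike.ofReal ∘ hT.eigenvalues)
  have diagonalization : T = V.1 * D * star V.1 := hT.spectral_theorem
  calc (T * T).trace = (V.1 * (D * ((star V.1 * V.1) * D)) * star V.1).trace := by
        conv_lhs => rw [diagonalization]
        simp only [Matrix.mul_assoc]
    _ = (D * D).trace := by
        rw [trace_mul_cycle, Unitary.coe_star_mul_self, Matrix.one_mul, Matrix.one_mul]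
    _ = _ := by simp [D, diagonal_mul_diagonal, sq]

lemma eigenvalues_le_one (hT : T.IsHermitian) (h : (1 - T).PosSemidef) (i : n) :
    hT.eigenvalues i ≤ 1 := by
  have unit : star ⇑(hT.eigenvectorBasis i) ⬝ᵥ ⇑(hT.eigenvectorBasis i) = (1 : 𝕜) := by
    rw [dotProduct_comm, ← EuclideanSpace.inner_eq_star_dotProduct,
      inner_self_eq_norm_sq_to_K, hT.eigenvectorBasis.norm_eq_one]
    simp
  have := h.re_dotProduct_nonneg (hT.eigenvectorBasis i)
  rw [Matrix.sub_mulVec, Matrix.one_mulVec, dotProduct_sub, unit, map_sub,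
    ← hT.eigenvalues_eq, RCLike.one_re] at this
  linarith

lemma one_le_det_one_add (hA : A.PosSemidef) : 1 ≤ (1 + A).det := by
  rw [← one_smul 𝕜 A, det_one_add_smul_eq_prod_eigenvalues hA.1]
  refine one_le_prod fun i ↦ ?_
  simpa using hA.eigenvalues_nonneg i

open scoped MatrixOrder Norms.L2Operator in
omit [DecidableEq n] in
lemma exists_eq_conjTranspose_mul_self (hA : A.PosSemidef) : ∃ K : Matrix n n 𝕜, A = Kᴴ * K := by
  classical exact CStarAlgebra.nonneg_iff_eq_star_mul_self.1 hA.nonneg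

lemma det_le_det_add (hM : M.PosDef) (hA : A.PosSemidef) : M.det ≤ (M + A).det := by
  obtain ⟨K, rfl⟩ := exists_eq_conjTranspose_mul_self hA
  rw [det_add_mul _ _ (M.isUnit_iff_isUnit_det.1 hM.isUnit)]
  exact le_mul_of_one_le_right hM.det_pos.le
    (one_le_det_one_add (hM.inv.posSemidef.mul_mul_conjTranspose_same K))

-- Both Schur complements of the block matrix `[1, 1; 1, 1 + A]` are positive semidefinite.
lemma posSemidef_one_sub_inv_one_add (hA : A.PosSemidef) : (1 - (1 + A)⁻¹).PosSemidef := by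
  have hP : (1 + A).PosDef := PosDef.one.add_posSemidef hA
  let _ : Invertible (1 : Matrix n n 𝕜) := invertibleOne
  let _ : Invertible (1 + A) := hP.isUnit.invertible
  have block : (fromBlocks 1 1 (1 : Matrix n n 𝕜)ᴴ (1 + A)).PosSemidef := by
    rw [PosDef.one.fromBlocks₁₁ 1 (1 + A), conjTranspose_one, inv_one]
    simpa using hA
  simpa using (hP.fromBlocks₂₂ 1 1).1 block

theorem det_one_add_add_le (hA : A.PosSemidef) (hB : B.PosSemidef) :
    (1 + A + B).det ≤ (1 + A).det * (1 + B).det := by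
  have hP : (1 + A).PosDef := PosDef.one.add_posSemidef hA
  obtain ⟨K, rfl⟩ := exists_eq_conjTranspose_mul_self hB
  rw [det_add_mul _ _ ((1 + A).isUnit_iff_isUnit_det.1 hP.isUnit), det_one_add_mul_comm Kᴴ K]
  refine mul_le_mul_of_nonneg_left ?_ hP.det_pos.le
  convert det_le_det_add
    (PosDef.one.add_posSemidef (hP.inv.posSemidef.mul_mul_conjTranspose_same K))
    ((posSemidef_one_sub_inv_one_add hA).mul_mul_conjTranspose_same K) using 2
  rw [Matrix.mul_sub, Matrix.sub_mul, Matrix.mul_one]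
  abel

end DeterminantInequalities

section ToeplitzOperators

open AddCircle
open scoped ComplexOrder

variable {T : ℝ} [Fact (0 < T)] {N : ℕ} {F G : AddCircle T → ℂ}

lemma toeplitz_one : toeplitz N (1 : AddCircle T → ℂ) = 1 := by
  have one_eq : (1 : AddCircle T → ℂ) = fourier 0 := by ext; simp
  ext i j
  rw [toeplitz, of_apply, one_eq, fourierCoeff_fourier, Pi.single_apply, Matrix.one_apply]
  simp [sub_eq_zero, Fin.ext_iff]

lemma toeplitz_add (hF : Integrable F haarAddCircle) (hG : Integrable G haarAddCircle) :
    toeplitz N (F + G) = toeplitz N F + toeplitz N G := by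
  ext i j
  simp [toeplitz, fourierCoeff.add hF hG]

lemma toeplitz_smul (c : ℂ) (F : AddCircle T → ℂ) : toeplitz N (c • F) = c • toeplitz N F := by
  ext i j
  simp [toeplitz, fourierCoeff.const_smul]

lemma star_fourierCoeff (F : AddCircle T → ℂ) (n : ℤ) :
    star (fourierCoeff F n) = fourierCoeff (star F) (-n) := by
  rw [fourierCoeff, fourierCoeff, Complex.star_def, ← integral_conj]
  simp

lemma isHermitian_toeplitz (hF : IsSelfAdjoint F) : (toeplitz N F).IsHermitian := by
  ext i j
  rw [conjTranspose_apply, toeplitz, of_apply, of_apply, star_fourierCoeff, hF.star_eq, neg_sub]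

lemma star_dotProduct_toeplitz_mulVec (hF : Integrable F haarAddCircle) (x : Fin N → ℂ) :
    star x ⬝ᵥ (toeplitz N F *ᵥ x) =
      ∫ t, F t * (star (∑ j : Fin N, x j * fourier j t) * ∑ j : Fin N, x j * fourier j t)
        ∂haarAddCircle := by
  have expand (t : AddCircle T) :
      F t * (star (∑ j : Fin N, x j * fourier j t) * ∑ j : Fin N, x j * fourier j t) =
        ∑ i : Fin N, ∑ j : Fin N, star (x i) * x j * (fourier (-((i : ℤ) - j)) t • F t) := by
    rw [star_sum, sum_mul_sum, mul_sum]
    refine sum_congr rfl fun i _ ↦ ?_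
    rw [mul_sum]
    refine sum_congr rfl fun j _ ↦ ?_
    rw [neg_sub, sub_eq_add_neg, fourier_add, fourier_neg, star_mul', smul_eq_mul, Complex.star_def]
    ring
  have integrable (i j : Fin N) : Integrable
      (fun t ↦ star (x i) * x j * (fourier (-((i : ℤ) - j)) t • F t)) haarAddCircle :=
    (hF.fourier_smul _).const_mul _
  simp only [expand]
  rw [integral_finsetSum _ fun i _ ↦ integrable_finsetSum _ fun j _ ↦ integrable i j]
  simp only [integral_finsetSum _ fun j _ ↦ integrable _ j, integral_const_mul, dotProduct, mulVec,
    mul_sum, Pi.star_apply, toeplitz, of_apply, fourierCoeff]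
  exact sum_congr rfl fun i _ ↦ sum_congr rfl fun j _ ↦ by ring

lemma posSemidef_toeplitz (hF : Integrable F haarAddCircle) (nonneg : 0 ≤ F) :
    (toeplitz N F).PosSemidef := by
  refine .of_dotProduct_mulVec_nonneg (isHermitian_toeplitz ?_) fun x ↦ ?_
  · exact funext fun t ↦ (IsSelfAdjoint.of_nonneg (nonneg t)).star_eq
  · rw [star_dotProduct_toeplitz_mulVec hF]
    exact integral_nonneg fun t ↦ mul_nonneg (nonneg t) (star_mul_self_nonneg _)

lemma fourierCoeff_comp_add_right (F : AddCircle T → ℂ) (h : AddCircle T) (n : ℤ) :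
    fourierCoeff (fun x ↦ F (x + h)) n = fourier n h * fourierCoeff F n := by
  have shift (x : AddCircle T) : fourier (-n) x • F (x + h) =
      fourier n h * (fourier (-n) (x + h) • F (x + h)) := by
    simp only [fourier_apply, smul_add, toCircle_add, smul_eq_mul, neg_smul, toCircle_neg,
      Circle.coe_mul, Circle.coe_inv]
    field_simp [Circle.coe_ne_zero]
  simp only [fourierCoeff, shift]
  rw [integral_const_mul, integral_add_right_eq_self fun x ↦ fourier (-n) x • F x]

lemma det_toeplitz_comp_add_right (F : AddCircle T → ℂ) (h : AddCircle T) :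
    (toeplitz N fun x ↦ F (x + h)).det = (toeplitz N F).det := by
  have conjugation : (toeplitz N fun x ↦ F (x + h)) =
      diagonal (fun i : Fin N ↦ fourier i h) * toeplitz N F *
        diagonal fun i : Fin N ↦ fourier (-i) h := by
    ext i j
    rw [mul_diagonal, diagonal_mul, toeplitz, toeplitz, of_apply, of_apply,
      fourierCoeff_comp_add_right, sub_eq_add_neg, fourier_add]
    ring
  rw [conjugation, det_mul, det_mul, det_diagonal, det_diagonal, mul_right_comm,
    ← prod_mul_distrib]
  simp only [← fourier_add, add_neg_cancel, fourier_zero, prod_const_one, one_mul]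

end ToeplitzOperators

section SetToeplitz

open AddCircle
open scoped ComplexOrder

variable {T : ℝ} [Fact (0 < T)] {N : ℕ} {A B : Set (AddCircle T)}

/-- The Toeplitz matrix of size `N` whose symbol is the indicator function of `A`. -/
def setToeplitz (N : ℕ) (A : Set (AddCircle T)) : Matrix (Fin N) (Fin N) ℂ :=
  toeplitz N (A.indicator 1)

lemma integrable_indicator_one (hA : MeasurableSet A) :
    Integrable (A.indicator (1 : AddCircle T → ℂ)) haarAddCircle :=
  (integrable_const 1).indicator hA

lemma toeplitz_one_add_smul_indicator (hA : MeasurableSet A) (c : ℂ) :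
    toeplitz N (1 + c • A.indicator 1) = 1 + c • setToeplitz N A := by
  have integrable_one : Integrable (1 : AddCircle T → ℂ) haarAddCircle := integrable_const 1
  rw [toeplitz_add integrable_one ((integrable_indicator_one hA).smul c), toeplitz_one,
    toeplitz_smul, setToeplitz]

omit [Fact (0 < T)] in
lemma isSelfAdjoint_indicator_one (A : Set (AddCircle T)) :
    IsSelfAdjoint (A.indicator (1 : AddCircle T → ℂ)) := by
  classical
  ext x
  simp [Set.indicator_apply, apply_ite]

lemma isHermitian_setToeplitz (N : ℕ) (A : Set (AddCircle T)) : (setToeplitz N A).IsHermitian :=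
  isHermitian_toeplitz (isSelfAdjoint_indicator_one A)

lemma posSemidef_setToeplitz (hA : MeasurableSet A) : (setToeplitz N A).PosSemidef :=
  posSemidef_toeplitz (integrable_indicator_one hA) (Set.indicator_nonneg fun _ _ ↦ zero_le_one)

lemma posSemidef_one_sub_setToeplitz (hA : MeasurableSet A) :
    (1 - setToeplitz N A).PosSemidef := by
  rw [sub_eq_add_neg, ← neg_one_smul ℂ, ← toeplitz_one_add_smul_indicator hA, neg_one_smul,
    ← sub_eq_add_neg, ← Set.indicator_compl]
  exact posSemidef_setToeplitz hA.compl

/-- The eigenvalues of `setToeplitz N A`. The number of eigenangles lying in `A` is distributed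
as a sum of independent Bernoulli variables with these parameters. -/
def setEigenvalue (N : ℕ) (A : Set (AddCircle T)) : Fin N → ℝ :=
  (isHermitian_setToeplitz N A).eigenvalues

lemma setEigenvalue_nonneg (hA : MeasurableSet A) (i : Fin N) : 0 ≤ setEigenvalue N A i :=
  (posSemidef_setToeplitz hA).eigenvalues_nonneg i

lemma setEigenvalue_le_one (hA : MeasurableSet A) (i : Fin N) : setEigenvalue N A i ≤ 1 :=
  eigenvalues_le_one _ (posSemidef_one_sub_setToeplitz hA) i

lemma fourierCoeff_indicator_one_zero (hA : MeasurableSet A) :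
    fourierCoeff (A.indicator 1) 0 = (haarAddCircle.real A : ℂ) := by
  simp [fourierCoeff, integral_indicator hA]

lemma sum_setEigenvalue (hA : MeasurableSet A) :
    ∑ i, setEigenvalue N A i = N * haarAddCircle.real A := by
  have trace_eq : (setToeplitz N A).trace = ∑ i, (setEigenvalue N A i : ℂ) :=
    (isHermitian_setToeplitz N A).trace_eq_sum_eigenvalues
  simp only [setToeplitz, toeplitz, trace, diag_apply, of_apply, sub_self,
    fourierCoeff_indicator_one_zero hA, sum_const, card_univ, Fintype.card_fin,
    nsmul_eq_mul] at trace_eq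
  exact_mod_cast trace_eq.symm

lemma sum_setEigenvalue_sq (N : ℕ) (A : Set (AddCircle T)) :
    ∑ i, setEigenvalue N A i ^ 2 =
      ∑ i : Fin N, ∑ j : Fin N, ‖fourierCoeff (A.indicator (1 : AddCircle T → ℂ)) (i - j)‖ ^ 2 := by
  have hT := isHermitian_setToeplitz N A
  have entry (i j : Fin N) : setToeplitz N A i j * setToeplitz N A j i =
      (‖fourierCoeff (A.indicator (1 : AddCircle T → ℂ)) (i - j)‖ : ℂ) ^ 2 := by
    rw [← hT.apply j i, Complex.star_def, Complex.mul_conj']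
    rfl
  have trace_eq : (setToeplitz N A * setToeplitz N A).trace =
      ∑ i, (setEigenvalue N A i : ℂ) ^ 2 := trace_mul_self_eq_sum_eigenvalues hT
  simp only [trace, diag_apply, Matrix.mul_apply, entry] at trace_eq
  exact_mod_cast trace_eq.symm

lemma det_one_add_smul_setToeplitz (N : ℕ) (A : Set (AddCircle T)) (c : ℂ) :
    (1 + c • setToeplitz N A).det = ∏ i, (1 + c * (setEigenvalue N A i : ℂ)) :=
  det_one_add_smul_eq_prod_eigenvalues (isHermitian_setToeplitz N A) c

lemma prod_one_add_setEigenvalue_preimage_add_right (hA : MeasurableSet A) (h : AddCircle T)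
    (c : ℝ) :
    ∏ i, (1 + c * setEigenvalue N ((· + h) ⁻¹' A) i) = ∏ i, (1 + c * setEigenvalue N A i) := by
  have hA' : MeasurableSet ((· + h) ⁻¹' A) := hA.preimage (measurable_add_const h)
  have det_eq := det_toeplitz_comp_add_right (N := N) (1 + (c : ℂ) • A.indicator 1) h
  change (toeplitz N (1 + (c : ℂ) • ((· + h) ⁻¹' A).indicator 1)).det = _ at det_eq
  rw [toeplitz_one_add_smul_indicator hA, toeplitz_one_add_smul_indicator hA',
    det_one_add_smul_setToeplitz, det_one_add_smul_setToeplitz] at det_eq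
  exact_mod_cast det_eq

lemma setToeplitz_union (hA : MeasurableSet A) (hB : MeasurableSet B) (disj : Disjoint A B) :
    setToeplitz N (A ∪ B) = setToeplitz N A + setToeplitz N B := by
  rw [setToeplitz, Set.indicator_union_of_disjoint disj]
  exact toeplitz_add (integrable_indicator_one hA) (integrable_indicator_one hB)

theorem prod_one_add_setEigenvalue_union_le (hA : MeasurableSet A) (hB : MeasurableSet B)
    (disj : Disjoint A B) :
    ∏ i, (1 + setEigenvalue N (A ∪ B) i) ≤
      (∏ i, (1 + setEigenvalue N A i)) * ∏ i, (1 + setEigenvalue N B i) := by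
  have det_eq (C : Set (AddCircle T)) :
      (1 + setToeplitz N C).det = (∏ i, (1 + setEigenvalue N C i) : ℝ) := by
    simpa using det_one_add_smul_setToeplitz N C 1
  have det_le := det_one_add_add_le (posSemidef_setToeplitz (N := N) hA)
    (posSemidef_setToeplitz hB)
  rw [add_assoc, ← setToeplitz_union hA hB disj, det_eq, det_eq, det_eq] at det_le
  exact_mod_cast det_le

lemma hasSum_norm_fourierCoeff_indicator_one_sq (hA : MeasurableSet A) :
    HasSum (fun n : ℤ ↦ ‖fourierCoeff (A.indicator (1 : AddCircle T → ℂ)) n‖ ^ 2)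
      (haarAddCircle.real A) := by
  have memLp : MemLp (A.indicator (1 : AddCircle T → ℂ)) 2 haarAddCircle :=
    (memLp_const 1).indicator hA
  have parseval := hasSum_sq_fourierCoeff (memLp.toLp _)
  have energy : ∫ t, ‖memLp.toLp _ t‖ ^ 2 ∂haarAddCircle = haarAddCircle.real A := by
    rw [← integral_indicator_one hA]
    refine integral_congr_ae (memLp.coeFn_toLp.mono fun t ht ↦ ?_)
    by_cases h : t ∈ A <;> simp [ht, h]
  rwa [energy, fourierCoeff_congr_ae memLp.coeFn_toLp] at parseval

end SetToeplitz

section VarianceGrowth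

lemma sum_inv_sq_le_of_lt_natAbs {s : Finset ℤ} {m : ℕ} (inj : Set.InjOn Int.natAbs s)
    (hs : ∀ n ∈ s, m < n.natAbs) : ∑ n ∈ s, ((n : ℝ) ^ 2)⁻¹ ≤ 2 / (m + 1) := by
  calc ∑ n ∈ s, ((n : ℝ) ^ 2)⁻¹ = ∑ k ∈ s.image Int.natAbs, ((k : ℝ) ^ 2)⁻¹ := by
        rw [sum_image inj]
        simp [Nat.cast_natAbs]
    _ ≤ ∑ k ∈ Ioo m (s.sup Int.natAbs + 1), ((k : ℝ) ^ 2)⁻¹ := by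
        refine sum_le_sum_of_subset_of_nonneg (fun k hk ↦ ?_) fun _ _ _ ↦ by positivity
        obtain ⟨n, hn, rfl⟩ := mem_image.1 hk
        exact mem_Ioo.2 ⟨hs n hn, Nat.lt_succ_of_le (le_sup (f := Int.natAbs) hn)⟩
    _ ≤ 2 / (m + 1) := sum_Ioo_inv_sq_le m _

lemma le_sum_Icc_add_of_hasSum {f : ℤ → ℝ} {S C : ℝ} (hf : HasSum f S) (nonneg : 0 ≤ f)
    (decay : ∀ n ≠ 0, f n ≤ C * ((n : ℝ) ^ 2)⁻¹) (a b : ℕ) :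
    S ≤ ∑ n ∈ Icc (-b : ℤ) a, f n + C * (2 / (a + 1) + 2 / (b + 1)) := by
  have C_nonneg : 0 ≤ C := by simpa using (nonneg 1).trans (decay 1 one_ne_zero)
  have tail (s : Finset ℤ) (m : ℕ) (inj : Set.InjOn Int.natAbs s)
      (hs : ∀ n ∈ s, m < n.natAbs) : ∑ n ∈ s, f n ≤ C * (2 / (m + 1)) :=
    calc ∑ n ∈ s, f n ≤ ∑ n ∈ s, C * ((n : ℝ) ^ 2)⁻¹ :=
          sum_le_sum fun n hn ↦ decay n (by have := hs n hn; omega)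
      _ ≤ C * (2 / (m + 1)) := by
          rw [← mul_sum]
          exact mul_le_mul_of_nonneg_left (sum_inv_sq_le_of_lt_natAbs inj hs) C_nonneg
  refine hasSum_le_of_sum_le hf fun s ↦ ?_
  set right := s.filter ((a : ℤ) < ·) with right_def
  set left := s.filter (· < (-b : ℤ)) with left_def
  have right_le : ∑ n ∈ right, f n ≤ C * (2 / (a + 1)) := by
    refine tail right a (fun n hn k hk h ↦ ?_) fun n hn ↦ ?_ <;>
      simp only [right_def, coe_filter, Set.mem_ofPred_eq, mem_filter] at * <;> omega
  have left_le : ∑ n ∈ left, f n ≤ C * (2 / (b + 1)) := by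
    refine tail left b (fun n hn k hk h ↦ ?_) fun n hn ↦ ?_ <;>
      simp only [left_def, coe_filter, Set.mem_ofPred_eq, mem_filter] at * <;> omega
  have cover : s ⊆ Icc (-b : ℤ) a ∪ (right ∪ left) := fun n hn ↦ by
    simp only [right_def, left_def, mem_union, mem_Icc, mem_filter, hn, true_and]
    omega
  have sum_union_le (t u : Finset ℤ) : ∑ n ∈ t ∪ u, f n ≤ ∑ n ∈ t, f n + ∑ n ∈ u, f n := by
    rw [← sum_union_inter]
    exact le_add_of_nonneg_right (sum_nonneg fun n _ ↦ nonneg n)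
  calc ∑ n ∈ s, f n ≤ ∑ n ∈ Icc (-b : ℤ) a ∪ (right ∪ left), f n :=
        sum_le_sum_of_subset_of_nonneg cover fun n _ _ ↦ nonneg n
    _ ≤ ∑ n ∈ Icc (-b : ℤ) a, f n + C * (2 / (a + 1) + 2 / (b + 1)) := by
        linarith [sum_union_le (Icc (-b : ℤ) a) (right ∪ left), sum_union_le right left]

lemma sum_fin_sub_eq_sum_Icc {M : Type*} [AddCommMonoid M] {N : ℕ} (f : ℤ → M) (i : Fin N) :
    ∑ j : Fin N, f (i - j) = ∑ n ∈ Icc (-(i.rev : ℕ) : ℤ) (i : ℕ), f n := by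
  refine sum_bij (fun j _ ↦ (i : ℤ) - j) (fun j _ ↦ ?_) (fun j _ k _ h ↦ ?_) (fun n hn ↦ ?_)
    fun _ _ ↦ rfl
  · rw [mem_Icc, Fin.val_rev]
    omega
  · ext
    simpa using h
  · rw [mem_Icc, Fin.val_rev] at hn
    exact ⟨⟨(i - n).toNat, by omega⟩, mem_univ _, by simp only; omega⟩

lemma sum_fin_two_div_add_two_div_rev_le (N : ℕ) :
    ∑ i : Fin N, (2 / ((i : ℝ) + 1) + 2 / ((i.rev : ℝ) + 1)) ≤ 4 * (1 + log N) := by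
  have sum_eq : ∑ i : Fin N, 2 / ((i : ℝ) + 1) = 2 * (harmonic N : ℝ) := by
    rw [Fin.sum_univ_eq_sum_range (fun i ↦ 2 / ((i : ℝ) + 1)), harmonic, Rat.cast_sum, mul_sum]
    simp [div_eq_mul_inv]
  have rev_eq : ∑ i : Fin N, 2 / ((i.rev : ℝ) + 1) = ∑ i : Fin N, 2 / ((i : ℝ) + 1) :=
    Equiv.sum_comp Fin.revPerm fun i : Fin N ↦ 2 / ((i : ℝ) + 1)
  rw [sum_add_distrib, rev_eq, sum_eq]
  linarith [harmonic_le_one_add_log N]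

open AddCircle

variable {T : ℝ} [Fact (0 < T)] {N : ℕ} {A : Set (AddCircle T)}

/-- The variance of the number of eigenangles lying in `A`, written as the sum of the variances of
Bernoulli variables with parameters `setEigenvalue N A`. -/
def countVariance (N : ℕ) (A : Set (AddCircle T)) : ℝ :=
  ∑ i, setEigenvalue N A i * (1 - setEigenvalue N A i)

lemma countVariance_eq_sum_sub (hA : MeasurableSet A) :
    countVariance N A = ∑ i : Fin N, (haarAddCircle.real A -
      ∑ j : Fin N, ‖fourierCoeff (A.indicator (1 : AddCircle T → ℂ)) (i - j)‖ ^ 2) := by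
  rw [sum_sub_distrib, ← sum_setEigenvalue_sq, sum_const, card_univ, Fintype.card_fin,
    nsmul_eq_mul, ← sum_setEigenvalue hA, ← sum_sub_distrib, countVariance]
  exact sum_congr rfl fun i _ ↦ by ring

theorem countVariance_le {C : ℝ} (hA : MeasurableSet A)
    (decay : ∀ n ≠ 0,
      ‖fourierCoeff (A.indicator (1 : AddCircle T → ℂ)) n‖ ^ 2 ≤ C * ((n : ℝ) ^ 2)⁻¹) :
    countVariance N A ≤ C * (4 * (1 + log N)) := by
  have C_nonneg : 0 ≤ C := by simpa using (sq_nonneg _).trans (decay 1 one_ne_zero)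
  calc countVariance N A ≤ ∑ i : Fin N, C * (2 / ((i : ℝ) + 1) + 2 / ((i.rev : ℝ) + 1)) := by
        rw [countVariance_eq_sum_sub hA]
        refine sum_le_sum fun i _ ↦ sub_left_le_of_le_add ?_
        rw [sum_fin_sub_eq_sum_Icc
          (fun n ↦ ‖fourierCoeff (A.indicator (1 : AddCircle T → ℂ)) n‖ ^ 2)]
        exact le_sum_Icc_add_of_hasSum (hasSum_norm_fourierCoeff_indicator_one_sq hA)
          (fun _ ↦ sq_nonneg _) decay _ _
    _ ≤ C * (4 * (1 + log N)) := by
        rw [← mul_sum]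
        exact mul_le_mul_of_nonneg_left (sum_fin_two_div_add_two_div_rev_le N) C_nonneg

end VarianceGrowth

section Arcs

open AddCircle

variable {T a b c d : ℝ}

/-- The arc of the circle covered by the interval `(a, b]`. -/
def arc (T a b : ℝ) : Set (AddCircle T) := (fun x : ℝ ↦ (x : AddCircle T)) '' Set.Ioc a b

/-- The arc of the circle covered by the interval `[a, b]`. -/
def closedArc (T a b : ℝ) : Set (AddCircle T) := (fun x : ℝ ↦ (x : AddCircle T)) '' Set.Icc a b

lemma preimage_add_right_arc (h : ℝ) :
    (fun x ↦ x + (h : AddCircle T)) ⁻¹' arc T (a + h) (b + h) = arc T a b := by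
  rw [arc, arc, ← Set.image_add_const_Ioc, Set.image_image]
  ext x
  simp

lemma closedArc_eq_insert (hab : a ≤ b) : closedArc T a b = insert ↑a (arc T a b) := by
  rw [closedArc, ← Set.Ioc_insert_left hab, Set.image_insert_eq, arc]

lemma closedArc_union_arc (hab : a ≤ b) (hbc : b ≤ c) :
    closedArc T a b ∪ arc T b c = closedArc T a c := by
  rw [closedArc, arc, ← Set.image_union, Set.Icc_union_Ioc_eq_Icc hab hbc, closedArc]

lemma isClosed_closedArc : IsClosed (closedArc T a b) :=
  (isCompact_Icc.image (AddCircle.continuous_mk' T)).isClosed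

variable [Fact (0 < T)]

lemma injOn_coe_Ico (a : ℝ) :
    Set.InjOn (fun x : ℝ ↦ (x : AddCircle T)) (Set.Ico a (a + T)) :=
  fun _ hx _ hy ↦ (coe_eq_coe_iff_of_mem_Ico hx hy).1

lemma coe_mem_closedArc (hb : b < a + T) {x : ℝ} (hx : x ∈ Set.Ico a (a + T)) :
    (x : AddCircle T) ∈ closedArc T a b ↔ x ≤ b := by
  rw [closedArc, (injOn_coe_Ico a).mem_image_iff (Set.Icc_subset_Ico_right hb) hx]
  exact and_iff_right hx.1

lemma coe_mem_arc (hb : b ≤ a + T) {x : ℝ} (hx : x ∈ Set.Ioc a (a + T)) :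
    (x : AddCircle T) ∈ arc T a b ↔ x ≤ b := by
  have inj : Set.InjOn (fun x : ℝ ↦ (x : AddCircle T)) (Set.Ioc a (a + T)) :=
    fun _ hx _ hy ↦ (coe_eq_coe_iff_of_mem_Ioc hx hy).1
  rw [arc, inj.mem_image_iff (Set.Ioc_subset_Ioc_right hb) hx]
  exact and_iff_right hx.1

lemma disjoint_closedArc_arc (hab : a ≤ b) (hbc : b ≤ c) (hc : c < a + T) :
    Disjoint (closedArc T a b) (arc T b c) := by
  have disj : Disjoint (Set.Icc a b) (Set.Ioc b c) := Set.disjoint_left.2 fun x hx hx' ↦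
    hx.2.not_gt hx'.1
  rw [Set.disjoint_iff_inter_eq_empty, closedArc, arc, ← (injOn_coe_Ico a).image_inter,
    disj.inter_eq, Set.image_empty]
  · exact fun x hx ↦ ⟨hx.1, (hx.2.trans hbc).trans_lt hc⟩
  · exact fun x hx ↦ ⟨hab.trans hx.1.le, hx.2.trans_lt hc⟩

lemma disjoint_arc_arc (hab : a ≤ b) (hbc : b ≤ c) (hcd : c ≤ d) (hd : d < a + T) :
    Disjoint (arc T a b) (arc T c d) :=
  (disjoint_closedArc_arc (hab.trans hbc) hcd hd).mono_left
    (Set.image_mono (Set.Ioc_subset_Icc_self.trans (Set.Icc_subset_Icc_right hbc)))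

lemma indicator_arc_mem_closedStep (hb : b < a + T) :
    (arc T a b).indicator 1 ∈ closedStep (AddCircle T) := by
  have inj := (injOn_coe_Ico (T := T) a).mono (Set.Icc_subset_Ico_right hb)
  rw [arc, ← Set.Icc_sdiff_left, inj.image_sdiff]
  exact indicator_sdiff_mem_closedStep isClosed_closedArc
    (((Set.finite_singleton a).inter_of_right _).image _).isClosed

lemma measurableSet_arc (hb : b < a + T) : MeasurableSet (arc T a b) :=
  measurableSet_of_indicator_mem_closedStep (indicator_arc_mem_closedStep hb)

lemma haarAddCircle_singleton (x : AddCircle T) : haarAddCircle {x} = 0 := by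
  have volume_eq := AddCircle.volume_closedBall T (x := x) 0
  rw [Metric.closedBall_zero, volume_eq_smul_haarAddCircle] at volume_eq
  simpa [not_le.2 (Fact.out : 0 < T)] using volume_eq

lemma closedArc_ae_eq_arc (hab : a ≤ b) : closedArc T a b =ᵐ[haarAddCircle] arc T a b := by
  rw [closedArc_eq_insert hab, ← Set.singleton_union]
  exact union_ae_eq_right_of_ae_eq_empty (ae_eq_empty.2 (haarAddCircle_singleton a))

lemma fourierCoeff_indicator_arc (hab : a ≤ b) (hb : b ≤ a + T) (n : ℤ) :
    fourierCoeff ((arc T a b).indicator (1 : AddCircle T → ℂ)) n =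
      (1 / T) • ∫ x in a..b, fourier (-n) (x : AddCircle T) := by
  have T_pos : 0 < T := Fact.out
  have inter_eq : Set.Ioc a (a + T) ∩ Set.Iic b = Set.Ioc a b := by
    rw [Set.Ioc_inter_Iic, min_eq_right hb]
  rw [fourierCoeff_eq_intervalIntegral _ _ a, intervalIntegral.integral_of_le (by linarith),
    intervalIntegral.integral_of_le hab, ← inter_eq, ← setIntegral_indicator measurableSet_Iic]
  congr 1
  refine setIntegral_congr_fun measurableSet_Ioc fun x hx ↦ ?_
  by_cases h : x ≤ b <;> simp [coe_mem_arc hb hx, h]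

lemma haarAddCircle_real_arc (hab : a ≤ b) (hb : b < a + T) :
    haarAddCircle.real (arc T a b) = (b - a) / T := by
  have coeff_zero := fourierCoeff_indicator_arc hab hb.le 0
  rw [fourierCoeff_indicator_one_zero (measurableSet_arc hb)] at coeff_zero
  simp only [neg_zero, fourier_zero, intervalIntegral.integral_const, Complex.real_smul,
    mul_one] at coeff_zero
  rw [div_eq_inv_mul, ← one_div]
  exact_mod_cast coeff_zero

lemma norm_fourierCoeff_indicator_arc_sq_le (hab : a ≤ b) (hb : b ≤ a + T) {n : ℤ} (hn : n ≠ 0) :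
    ‖fourierCoeff ((arc T a b).indicator (1 : AddCircle T → ℂ)) n‖ ^ 2 ≤
      (π ^ 2)⁻¹ * ((n : ℝ) ^ 2)⁻¹ := by
  have T_pos : 0 < T := Fact.out
  have integral_eq : ∫ x in a..b, fourier (-n) (x : AddCircle T) =
      T / (-2 * π * Complex.I * n) *
        (fourier (-n) (b : AddCircle T) - fourier (-n) (a : AddCircle T)) := by
    rw [intervalIntegral.integral_eq_sub_of_hasDerivAt
      (fun x _ ↦ has_antideriv_at_fourier_neg ‹_› hn x), mul_sub]
    exact (Continuous.intervalIntegrable (by fun_prop) _ _)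
  have norm_sub_le :
      ‖fourier (-n) (b : AddCircle T) - fourier (-n) (a : AddCircle T)‖ ≤ 2 := by
    refine (norm_sub_le _ _).trans_eq ?_
    simp only [fourier_apply, Circle.norm_coe]
    norm_num
  have norm_eq : ‖(T / (-2 * π * Complex.I * n) : ℂ)‖ = T / (2 * π * |(n : ℝ)|) := by
    simp [abs_of_pos T_pos, abs_of_pos pi_pos]
  calc ‖fourierCoeff ((arc T a b).indicator (1 : AddCircle T → ℂ)) n‖ ^ 2
      ≤ (1 / T * (T / (2 * π * |(n : ℝ)|) * 2)) ^ 2 := by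
        rw [fourierCoeff_indicator_arc hab hb, integral_eq, norm_smul, norm_mul, norm_eq,
          Real.norm_of_nonneg (by positivity)]
        gcongr
    _ = (π ^ 2)⁻¹ * ((n : ℝ) ^ 2)⁻¹ := by
        rw [← sq_abs (n : ℝ)]
        field_simp

end Arcs

section AngleCounts

variable {N : ℕ} {A B : Set (AddCircle (2 * π))}

open Classical in
/-- The number of eigenvalue angles of `U` lying in `A`, counted with multiplicity. -/
def angleCount (A : Set (AddCircle (2 * π))) (U : unitaryGroup (Fin N) ℂ) : ℕ :=
  #{i | ((eigenvalueVec U.1 i).arg : AddCircle (2 * π)) ∈ A}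

lemma angleCount_le (A : Set (AddCircle (2 * π))) (U : unitaryGroup (Fin N) ℂ) :
    angleCount A U ≤ N :=
  (card_le_univ _).trans_eq (Fintype.card_fin N)

lemma angleCount_union (disj : Disjoint A B) (U : unitaryGroup (Fin N) ℂ) :
    angleCount (A ∪ B) U = angleCount A U + angleCount B U := by
  classical
  simp only [angleCount, Set.mem_union, filter_or]
  exact card_union_of_disjoint
    (disjoint_filter.2 fun i _ hA hB ↦ Set.disjoint_left.1 disj hA hB)

lemma ite_arg_mem_Icc_iff {φ : ℝ} (hφ : φ < 2 * π) (z : ℂ) :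
    (if 0 ≤ z.arg then z.arg else z.arg + 2 * π) ∈ Set.Icc 0 φ ↔
      (z.arg : AddCircle (2 * π)) ∈ closedArc (2 * π) 0 φ := by
  set x := if 0 ≤ z.arg then z.arg else z.arg + 2 * π with x_def
  have coe_x : (x : AddCircle (2 * π)) = z.arg := by
    rw [x_def]
    split_ifs
    · rfl
    · rw [AddCircle.coe_add, AddCircle.coe_period, add_zero]
  have x_mem : x ∈ Set.Ico 0 (0 + 2 * π) := by
    have := z.neg_pi_lt_arg
    have := z.arg_le_pi
    rw [x_def, Set.mem_Ico]
    split_ifs <;> constructor <;> linarith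
  rw [← coe_x, coe_mem_closedArc (by linarith) x_mem]
  exact and_iff_right x_mem.1

lemma countFun_eq_angleCount {φ : ℝ} (hφ : φ < 2 * π) (U : unitaryGroup (Fin N) ℂ) :
    countFun N U φ = angleCount (closedArc (2 * π) 0 φ) U := by
  rw [countFun, countAngles, eigenAngles, ← univ_map_eigenvalueVec, Multiset.map_map,
    Multiset.filter_map, Multiset.card_map, angleCount, Finset.card_def, filter_val]
  congr! 3
  exact ite_arg_mem_Icc_iff hφ _

lemma multStat_one_add_smul_indicator (A : Set (AddCircle (2 * π))) (c : ℂ)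
    (U : unitaryGroup (Fin N) ℂ) :
    multStat (1 + c • A.indicator 1) U = (1 + c) ^ angleCount A U := by
  classical
  rw [multStat, angleCount, ← prod_const, prod_filter]
  exact prod_congr rfl fun i _ ↦ by
    simp only [Pi.add_apply, Pi.one_apply, Pi.smul_apply, Set.indicator_apply, smul_eq_mul]
    split_ifs <;> simp

lemma one_add_smul_indicator_mem_closedStep
    (hA : A.indicator 1 ∈ closedStep (AddCircle (2 * π))) (c : ℂ) :
    1 + c • A.indicator 1 ∈ closedStep (AddCircle (2 * π)) :=
  add_mem one_mem_closedStep (Submodule.smul_mem _ c hA)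

lemma measurable_angleCount (hA : A.indicator 1 ∈ closedStep (AddCircle (2 * π))) :
    Measurable (angleCount A : unitaryGroup (Fin N) ℂ → ℕ) := by
  have measurable_pow : Measurable fun U : unitaryGroup (Fin N) ℂ ↦ (2 : ℂ) ^ angleCount A U := by
    simpa only [← one_add_one_eq_two, ← multStat_one_add_smul_indicator] using
      measurable_multStat (one_add_smul_indicator_mem_closedStep hA 1)
  have two_pow_injective : Function.Injective fun k : ℕ ↦ (2 : ℂ) ^ k := fun k l h ↦ by
    have : ((2 ^ k : ℕ) : ℂ) = (2 ^ l : ℕ) := by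
      push_cast
      exact h
    exact Nat.pow_right_injective le_rfl (by exact_mod_cast this)
  refine measurable_to_countable' fun k ↦ ?_
  convert measurable_pow (measurableSet_singleton (2 ^ k)) using 1
  ext U
  exact two_pow_injective.eq_iff.symm

variable {ℙ : Measure (unitaryGroup (Fin N) ℂ)} [IsProbabilityMeasure ℙ] [ℙ.IsMulLeftInvariant]

theorem integral_one_add_pow_angleCount (hA : A.indicator 1 ∈ closedStep (AddCircle (2 * π)))
    (c : ℝ) :
    ∫ U, (1 + c) ^ angleCount A U ∂ℙ = ∏ i, (1 + c * setEigenvalue N A i) := by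
  have integral_eq := integral_multStat (ℙ := ℙ) (one_add_smul_indicator_mem_closedStep hA c)
  rw [toeplitz_one_add_smul_indicator (measurableSet_of_indicator_mem_closedStep hA),
    det_one_add_smul_setToeplitz] at integral_eq
  simp only [multStat_one_add_smul_indicator] at integral_eq
  apply Complex.ofReal_injective
  rw [← integral_complex_ofReal]
  exact_mod_cast integral_eq

theorem integral_two_pow_angleCount_mul_le (hA : A.indicator 1 ∈ closedStep (AddCircle (2 * π)))
    (hB : B.indicator 1 ∈ closedStep (AddCircle (2 * π))) (disj : Disjoint A B) :
    ∫ U, (2 : ℝ) ^ angleCount A U * 2 ^ angleCount B U ∂ℙ ≤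
      (∏ i, (1 + setEigenvalue N A i)) * ∏ i, (1 + setEigenvalue N B i) := by
  have hAB : (A ∪ B).indicator 1 ∈ closedStep (AddCircle (2 * π)) := by
    rw [Set.indicator_union_of_disjoint disj]
    exact add_mem hA hB
  have integral_union := integral_one_add_pow_angleCount (ℙ := ℙ) hAB 1
  simp only [one_add_one_eq_two, one_mul, angleCount_union disj, pow_add] at integral_union
  rw [integral_union]
  exact prod_one_add_setEigenvalue_union_le (measurableSet_of_indicator_mem_closedStep hA)
    (measurableSet_of_indicator_mem_closedStep hB) disj

end AngleCounts

section VarianceFromGeneratingFunction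

section Coefficients

variable {ι R : Type*} [CommRing R]

lemma coeff_one_add_C_mul_X_mul_succ (a : R) (q : Polynomial R) (k : ℕ) :
    ((1 + Polynomial.C a * Polynomial.X) * q).coeff (k + 1) = q.coeff (k + 1) + a * q.coeff k := by
  rw [add_mul, one_mul, mul_assoc, Polynomial.coeff_add, Polynomial.coeff_C_mul,
    Polynomial.coeff_X_mul]

lemma coeff_zero_prod_one_add_C_mul_X (s : Finset ι) (p : ι → R) :
    (∏ i ∈ s, (1 + Polynomial.C (p i) * Polynomial.X)).coeff 0 = 1 := by
  simp [Polynomial.coeff_zero_prod]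

lemma coeff_one_prod_one_add_C_mul_X (s : Finset ι) (p : ι → R) :
    (∏ i ∈ s, (1 + Polynomial.C (p i) * Polynomial.X)).coeff 1 = ∑ i ∈ s, p i := by
  induction s using Finset.cons_induction with
  | empty => simp [Polynomial.coeff_one]
  | cons a s _ ih =>
    rw [prod_cons, sum_cons, coeff_one_add_C_mul_X_mul_succ, ih,
      coeff_zero_prod_one_add_C_mul_X, mul_one, add_comm]

lemma two_mul_coeff_two_prod_one_add_C_mul_X (s : Finset ι) (p : ι → R) :
    2 * (∏ i ∈ s, (1 + Polynomial.C (p i) * Polynomial.X)).coeff 2 =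
      (∑ i ∈ s, p i) ^ 2 - ∑ i ∈ s, p i ^ 2 := by
  induction s using Finset.cons_induction with
  | empty => simp [Polynomial.coeff_one]
  | cons a s _ ih =>
    rw [prod_cons, sum_cons, sum_cons, coeff_one_add_C_mul_X_mul_succ, mul_add, ih,
      coeff_one_prod_one_add_C_mul_X]
    ring

end Coefficients

variable {Ω ι : Type*} [MeasurableSpace Ω] {μ : Measure Ω} [IsProbabilityMeasure μ]
  {X : Ω → ℕ} {N : ℕ}

lemma integrable_comp_of_le (hX : Measurable X) (X_le : ∀ ω, X ω ≤ N) (f : ℕ → ℝ) :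
    Integrable (fun ω ↦ f (X ω)) μ := by
  refine .of_bound (measurable_from_nat.comp hX).aestronglyMeasurable
    (∑ k ∈ range (N + 1), ‖f k‖) (ae_of_all _ fun ω ↦ ?_)
  exact single_le_sum (f := fun k ↦ ‖f k‖) (fun k _ ↦ norm_nonneg _)
    (mem_range.2 (Nat.lt_succ_of_le (X_le ω)))

lemma integral_one_add_pow_eq_sum (hX : Measurable X) (X_le : ∀ ω, X ω ≤ N) (c : ℝ) :
    ∫ ω, (1 + c) ^ X ω ∂μ = ∑ k ∈ range (N + 1), c ^ k * ∫ ω, ((X ω).choose k : ℝ) ∂μ := by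
  have pow_eq (ω : Ω) :
      (1 + c) ^ X ω = ∑ k ∈ range (N + 1), c ^ k * ((X ω).choose k : ℝ) := by
    rw [add_comm, add_pow]
    simp only [one_pow, mul_one]
    refine sum_subset (range_subset_range.2 (Nat.succ_le_succ (X_le ω))) fun k _ hk ↦ ?_
    rw [Nat.choose_eq_zero_of_lt (by simpa using hk), Nat.cast_zero, mul_zero]
  simp only [pow_eq]
  rw [integral_finsetSum _ fun k _ ↦
    (integrable_comp_of_le hX X_le fun n ↦ (n.choose k : ℝ)).const_mul _]
  exact sum_congr rfl fun k _ ↦ integral_const_mul _ _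

variable [Fintype ι] {p : ι → ℝ}

lemma integral_choose_eq_coeff (hX : Measurable X) (X_le : ∀ ω, X ω ≤ N)
    (gen : ∀ c, ∫ ω, (1 + c) ^ X ω ∂μ = ∏ i, (1 + c * p i)) (k : ℕ) :
    ∫ ω, ((X ω).choose k : ℝ) ∂μ =
      (∏ i, (1 + Polynomial.C (p i) * Polynomial.X)).coeff k := by
  have poly_eq : ∑ k ∈ range (N + 1),
      Polynomial.monomial k (∫ ω, ((X ω).choose k : ℝ) ∂μ) =
        ∏ i, (1 + Polynomial.C (p i) * Polynomial.X) := by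
    refine Polynomial.funext fun c ↦ ?_
    simp only [Polynomial.eval_finsetSum, Polynomial.eval_monomial, Polynomial.eval_prod,
      Polynomial.eval_add, Polynomial.eval_one, Polynomial.eval_mul, Polynomial.eval_C,
      Polynomial.eval_X]
    simp only [mul_comm _ c, mul_comm _ (c ^ _)]
    rw [← integral_one_add_pow_eq_sum hX X_le, gen]
  rw [← poly_eq, Polynomial.finsetSum_coeff]
  simp only [Polynomial.coeff_monomial, sum_ite_eq', mem_range]
  split_ifs with hk
  · rfl
  · simp [fun ω ↦ Nat.choose_eq_zero_of_lt ((Nat.lt_succ_of_le (X_le ω)).trans_le (not_lt.1 hk))]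

theorem variance_eq_of_integral_one_add_pow (hX : Measurable X) (X_le : ∀ ω, X ω ≤ N)
    (gen : ∀ c, ∫ ω, (1 + c) ^ X ω ∂μ = ∏ i, (1 + c * p i)) :
    ProbabilityTheory.variance (fun ω ↦ (X ω : ℝ)) μ = ∑ i, p i * (1 - p i) := by
  have choose_eq (k : ℕ) := integral_choose_eq_coeff hX X_le gen k
  have memLp : MemLp (fun ω ↦ (X ω : ℝ)) 2 μ := by
    refine .of_bound (measurable_from_nat.comp hX).aestronglyMeasurable N (ae_of_all _ fun ω ↦ ?_)
    simpa using X_le ω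
  have mean_eq : ∫ ω, (X ω : ℝ) ∂μ = ∑ i, p i := by
    simpa [coeff_one_prod_one_add_C_mul_X] using choose_eq 1
  have sq_mean_eq : ∫ ω, (X ω : ℝ) ^ 2 ∂μ = (∑ i, p i) ^ 2 - ∑ i, p i ^ 2 + ∑ i, p i := by
    have sq_eq (ω : Ω) : (X ω : ℝ) ^ 2 = 2 * ((X ω).choose 2 : ℝ) + X ω := by
      rw [Nat.cast_choose_two]
      ring
    simp only [sq_eq]
    rw [integral_add ((integrable_comp_of_le hX X_le fun n ↦ (n.choose 2 : ℝ)).const_mul 2)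
      (integrable_comp_of_le hX X_le Nat.cast), integral_const_mul, choose_eq, mean_eq,
      two_mul_coeff_two_prod_one_add_C_mul_X]
  rw [ProbabilityTheory.variance_eq_sub memLp]
  simp only [Pi.pow_apply, mean_eq, sq_mean_eq]
  simp only [mul_sub, mul_one, sum_sub_distrib, ← sq]
  ring

end VarianceFromGeneratingFunction

section KolmogorovDistance

variable {N : ℕ} {θ : ℝ} {U : unitaryGroup (Fin N) ℂ}

/-- The discrepancy `|𝒩_θ / N - θ / (2π)|`, whose supremum over `θ` is `dK`. -/
def discrepancy (U : unitaryGroup (Fin N) ℂ) (θ : ℝ) : ℝ :=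
  |(countFun N U θ : ℝ) / N - θ / (2 * π)|

lemma discrepancy_le_one (hθ : θ ∈ Set.Ico 0 (2 * π)) : discrepancy U θ ≤ 1 := by
  have count_nonneg : 0 ≤ (countFun N U θ : ℝ) / N := by positivity
  have count_le_one : (countFun N U θ : ℝ) / N ≤ 1 := by
    rw [countFun_eq_angleCount hθ.2]
    exact div_le_one_of_le₀ (by exact_mod_cast angleCount_le _ U) (by positivity)
  have angle_nonneg : 0 ≤ θ / (2 * π) := div_nonneg hθ.1 two_pi_pos.le
  have angle_le_one : θ / (2 * π) ≤ 1 := div_le_one_of_le₀ hθ.2.le two_pi_pos.le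
  rw [discrepancy, abs_le]
  constructor <;> linarith

lemma discrepancy_le_dK (hθ : θ ∈ Set.Ico 0 (2 * π)) : discrepancy U θ ≤ dK N U :=
  le_ciSup (f := fun φ : Set.Ico 0 (2 * π) ↦ discrepancy U φ)
    ⟨1, Set.forall_mem_range.2 fun φ ↦ discrepancy_le_one φ.2⟩ ⟨θ, hθ⟩

lemma zero_mem_Ico_two_pi : (0 : ℝ) ∈ Set.Ico 0 (2 * π) := ⟨le_rfl, two_pi_pos⟩

lemma dK_nonneg : 0 ≤ dK N U := (abs_nonneg _).trans (discrepancy_le_dK zero_mem_Ico_two_pi)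

lemma dK_le_one : dK N U ≤ 1 :=
  have : Nonempty (Set.Ico 0 (2 * π)) := ⟨0, zero_mem_Ico_two_pi⟩
  ciSup_le fun φ ↦ discrepancy_le_one φ.2

lemma eventually_countFun_eq (U : unitaryGroup (Fin N) ℂ) (θ : ℝ) :
    ∀ᶠ x in nhdsWithin θ (Set.Ioi θ), countFun N U x = countFun N U θ := by
  have eventually_iff :
      ∀ᶠ x in nhdsWithin θ (Set.Ioi θ), ∀ a ∈ (eigenAngles N U).toFinset, a ≤ x ↔ a ≤ θ := by
    rw [Finset.eventually_all]
    intro a _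
    rcases le_or_gt a θ with le | gt
    · filter_upwards [self_mem_nhdsWithin] with x hx
      exact iff_of_true (le.trans hx.le) le
    · filter_upwards [Ioo_mem_nhdsGT gt] with x hx
      exact iff_of_false hx.2.not_ge gt.not_ge
  filter_upwards [eventually_iff] with x hx
  rw [countFun, countFun, countAngles, countAngles]
  congr 1
  exact @Multiset.filter_congr _ _ _ (_) (_) _ fun a ha ↦
    and_congr_right' (hx a (Multiset.mem_toFinset.2 ha))

/-- The rational angles in `[0, 2π)`: by right continuity, they already determine `dK`. -/
abbrev RationalAngle : Type := {q : ℚ // (q : ℝ) ∈ Set.Ico 0 (2 * π)}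

lemma exists_rationalAngle_lt_discrepancy {c : ℝ} (hθ : θ ∈ Set.Ico 0 (2 * π))
    (hc : c < discrepancy U θ) : ∃ q : RationalAngle, c < discrepancy U q.1 := by
  have right_limit : Tendsto (discrepancy U) (nhdsWithin θ (Set.Ioi θ))
      (nhds (discrepancy U θ)) := by
    have continuous_fixed_count :
        Continuous fun x : ℝ ↦ |(countFun N U θ : ℝ) / N - x / (2 * π)| := by fun_prop
    refine ((continuous_fixed_count.tendsto θ).mono_left nhdsWithin_le_nhds).congr' ?_
    filter_upwards [eventually_countFun_eq U θ] with x hx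
    rw [discrepancy, hx]
  obtain ⟨u, hu, subset⟩ := mem_nhdsGT_iff_exists_Ioo_subset.1
    ((right_limit.eventually_const_lt hc).and (Ioo_mem_nhdsGT hθ.2))
  obtain ⟨q, θ_lt_q, q_lt_u⟩ := exists_rat_btwn (show θ < u from hu)
  obtain ⟨c_lt, q_mem⟩ := subset ⟨θ_lt_q, q_lt_u⟩
  exact ⟨⟨q, hθ.1.trans q_mem.1.le, q_mem.2⟩, c_lt⟩

lemma dK_eq_iSup_rationalAngle (U : unitaryGroup (Fin N) ℂ) :
    dK N U = ⨆ q : RationalAngle, discrepancy U q.1 := by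
  have : Nonempty (Set.Ico 0 (2 * π)) := ⟨0, zero_mem_Ico_two_pi⟩
  have : Nonempty RationalAngle := ⟨0, by exact_mod_cast zero_mem_Ico_two_pi⟩
  have bdd : BddAbove (Set.range fun q : RationalAngle ↦ discrepancy U q.1) :=
    ⟨1, Set.forall_mem_range.2 fun q ↦ discrepancy_le_one q.2⟩
  refine le_antisymm (ciSup_le fun φ ↦ le_of_forall_lt fun c hc ↦ ?_)
    (ciSup_le fun q ↦ discrepancy_le_dK q.2)
  obtain ⟨q, hq⟩ := exists_rationalAngle_lt_discrepancy φ.2 hc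
  exact hq.trans_le (le_ciSup bdd q)

lemma measurable_angleCount_closedArc (a b : ℝ) :
    Measurable (angleCount (closedArc (2 * π) a b) : unitaryGroup (Fin N) ℂ → ℕ) :=
  measurable_angleCount (indicator_mem_closedStep isClosed_closedArc)

lemma measurable_dK : Measurable (dK N) := by
  rw [funext dK_eq_iSup_rationalAngle]
  refine Measurable.iSup fun q ↦ ?_
  have measurable_count := measurable_angleCount_closedArc (N := N) 0 q.1
  simp only [discrepancy, countFun_eq_angleCount q.2.2]
  fun_prop

lemma integrable_dK (ℙ : Measure (unitaryGroup (Fin N) ℂ)) [IsFiniteMeasure ℙ] :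
    Integrable (dK N) ℙ :=
  .of_bound measurable_dK.aestronglyMeasurable 1 (ae_of_all _ fun U ↦ by
    rw [Real.norm_of_nonneg dK_nonneg]
    exact dK_le_one)

-- At `θ = π / N` the count `𝒩_θ` is an integer while its mean `N θ / (2π)` is `1 / 2`.
lemma one_div_two_mul_le_dK (hN : 0 < N) (U : unitaryGroup (Fin N) ℂ) :
    1 / (2 * N) ≤ dK N U := by
  have one_le_N : (1 : ℝ) ≤ N := by exact_mod_cast hN
  have angle_mem : π / N ∈ Set.Ico 0 (2 * π) := by
    refine ⟨by positivity, (div_le_self pi_pos.le one_le_N).trans_lt ?_⟩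
    linarith [pi_pos]
  have half_le : (1 : ℝ) / 2 ≤ |(countFun N U (π / N) : ℝ) - 1 / 2| := by
    rcases Nat.eq_zero_or_pos (countFun N U (π / N)) with zero | pos
    · norm_num [zero]
    · have : (1 : ℝ) ≤ countFun N U (π / N) := by exact_mod_cast pos
      exact le_abs.2 (.inl (by linarith))
  calc (1 : ℝ) / (2 * N) = 1 / 2 / N := by rw [div_div]
    _ ≤ |(countFun N U (π / N) : ℝ) - 1 / 2| / N := by gcongr
    _ = discrepancy U (π / N) := by
        rw [discrepancy, ← Nat.abs_cast N, ← abs_div, Nat.abs_cast]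
        congr 1
        field_simp
    _ ≤ dK N U := discrepancy_le_dK angle_mem

lemma one_div_two_le_mul_integral_dK {ℙ : Measure (unitaryGroup (Fin N) ℂ)} [IsProbabilityMeasure ℙ]
    (hN : 0 < N) : 1 / 2 ≤ N * ∫ U, dK N U ∂ℙ := by
  have integral_ge := integral_mono (integrable_const _) (integrable_dK ℙ)
    (one_div_two_mul_le_dK hN)
  rw [integral_const, probReal_univ, one_smul, ← div_div] at integral_ge
  exact (div_le_iff₀' (by positivity)).1 integral_ge

lemma abs_angleCount_closedArc_sub_le (hθ : θ ∈ Set.Ico 0 (2 * π)) :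
    |(angleCount (closedArc (2 * π) 0 θ) U : ℝ) - N * (θ / (2 * π))| ≤ N * dK N U := by
  rcases Nat.eq_zero_or_pos N with rfl | hN
  · simpa using angleCount_le _ U
  calc |(angleCount (closedArc (2 * π) 0 θ) U : ℝ) - N * (θ / (2 * π))|
      = N * discrepancy U θ := by
        rw [discrepancy, countFun_eq_angleCount hθ.2, ← Nat.abs_cast N, ← abs_mul, Nat.abs_cast,
          mul_sub, mul_div_cancel₀ _ (by positivity)]
    _ ≤ N * dK N U := by gcongr; exact discrepancy_le_dK hθ

lemma angleCount_arc_le {a b : ℝ} (ha : 0 ≤ a) (hab : a ≤ b) (hb : b < 2 * π) :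
    (angleCount (arc (2 * π) a b) U : ℝ) ≤ N * ((b - a) / (2 * π)) + 2 * (N * dK N U) := by
  have count_add : (angleCount (closedArc (2 * π) 0 a) U : ℝ) + angleCount (arc (2 * π) a b) U =
      angleCount (closedArc (2 * π) 0 b) U := by
    rw [← closedArc_union_arc ha hab,
      angleCount_union (disjoint_closedArc_arc ha hab (by rwa [zero_add]))]
    push_cast
    rfl
  have count_a := (abs_le.1 (abs_angleCount_closedArc_sub_le (U := U) ⟨ha, hab.trans_lt hb⟩)).1
  have count_b := (abs_le.1 (abs_angleCount_closedArc_sub_le (U := U) ⟨ha.trans hab, hb⟩)).2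
  rw [sub_div, mul_sub]
  linarith

end KolmogorovDistance

section CountVariance

variable {N : ℕ} {A B : Set (AddCircle (2 * π))} {ℙ : Measure (unitaryGroup (Fin N) ℂ)}
  [IsProbabilityMeasure ℙ] [ℙ.IsMulLeftInvariant]

theorem variance_angleCount (hA : A.indicator 1 ∈ closedStep (AddCircle (2 * π))) :
    ProbabilityTheory.variance (fun U ↦ (angleCount A U : ℝ)) ℙ = countVariance N A :=
  variance_eq_of_integral_one_add_pow (measurable_angleCount hA) (angleCount_le A)
    (integral_one_add_pow_angleCount hA)

lemma countVariance_congr_ae (hA : MeasurableSet A) (hB : MeasurableSet B)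
    (hAB : A =ᵐ[AddCircle.haarAddCircle] B) : countVariance N A = countVariance N B := by
  have indicator_ae_eq : A.indicator (1 : AddCircle (2 * π) → ℂ) =ᵐ[AddCircle.haarAddCircle]
      B.indicator 1 := indicator_ae_eq_of_ae_eq_set hAB
  simp only [countVariance_eq_sum_sub hA, countVariance_eq_sum_sub hB, measureReal_congr hAB,
    fourierCoeff_congr_ae indicator_ae_eq]

theorem variance_countFun {θ : ℝ} (hθ : θ ∈ Set.Ico 0 (2 * π)) :
    ProbabilityTheory.variance (fun U ↦ (countFun N U θ : ℝ)) ℙ =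
      countVariance N (arc (2 * π) 0 θ) := by
  simp only [countFun_eq_angleCount hθ.2]
  rw [variance_angleCount (indicator_mem_closedStep isClosed_closedArc)]
  exact countVariance_congr_ae isClosed_closedArc.measurableSet
    (measurableSet_arc (by rw [zero_add]; exact hθ.2)) (closedArc_ae_eq_arc hθ.1)

end CountVariance

section BernoulliInequalities

lemma hasDerivAt_log_one_add_add_sq_div_eight {x : ℝ} (hx : 0 ≤ x) :
    HasDerivAt (fun y : ℝ ↦ log (1 + y) + y ^ 2 / 8) ((1 + x)⁻¹ + x / 4) x := by
  have deriv_log := ((hasDerivAt_id x).const_add 1).log (by simp only [id_eq]; positivity)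
  have deriv_sq := ((hasDerivAt_id x).pow 2).div_const 8
  refine (deriv_log.add deriv_sq).congr_deriv ?_
  simp only [id_eq, Nat.cast_ofNat]
  ring

lemma concaveOn_log_one_add_add_sq_div_eight :
    ConcaveOn ℝ (Set.Icc 0 1) fun y : ℝ ↦ log (1 + y) + y ^ 2 / 8 := by
  refine AntitoneOn.concaveOn_of_deriv (convex_Icc 0 1)
    (fun x hx ↦ (hasDerivAt_log_one_add_add_sq_div_eight hx.1).continuousAt.continuousWithinAt)
    ?_ ?_ <;> rw [interior_Icc]
  · exact fun x hx ↦
      (hasDerivAt_log_one_add_add_sq_div_eight hx.1.le).differentiableAt.differentiableWithinAt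
  · intro x hx y hy hxy
    have x_pos : 0 < x := hx.1
    have y_pos : 0 < y := hy.1
    rw [(hasDerivAt_log_one_add_add_sq_div_eight hx.1.le).deriv,
      (hasDerivAt_log_one_add_add_sq_div_eight hy.1.le).deriv]
    have denom_le : (1 + x) * (1 + y) ≤ 4 := by nlinarith [hx.2, hy.2]
    have inv_sub : (1 + x)⁻¹ - (1 + y)⁻¹ = (y - x) / ((1 + x) * (1 + y)) := by
      field_simp
      ring
    have div_le : (y - x) / 4 ≤ (y - x) / ((1 + x) * (1 + y)) :=
      div_le_div_of_nonneg_left (sub_nonneg.2 hxy) (by positivity) denom_le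
    linarith

-- The function `log (1 + x) + x ^ 2 / 8` is concave on `[0, 1]`, so it lies above its chord.
lemma mul_one_sub_div_eight_le_log_one_add_sub {x : ℝ} (hx₀ : 0 ≤ x) (hx₁ : x ≤ 1) :
    x * (1 - x) / 8 ≤ log (1 + x) - x * log 2 := by
  have chord := concaveOn_log_one_add_add_sq_div_eight.2 (Set.left_mem_Icc.2 zero_le_one)
    (Set.right_mem_Icc.2 zero_le_one) (sub_nonneg.2 hx₁) hx₀ (sub_add_cancel 1 x)
  norm_num at chord
  linarith

lemma one_add_three_mul_le_sq_mul_exp {x : ℝ} (hx₀ : 0 ≤ x) (hx₁ : x ≤ 1) :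
    1 + 3 * x ≤ (1 + x) ^ 2 * exp (x * (1 - x)) := by
  have variance_nonneg : 0 ≤ x * (1 - x) := mul_nonneg hx₀ (sub_nonneg.2 hx₁)
  calc 1 + 3 * x ≤ (1 + x) ^ 2 * (x * (1 - x) + 1) := by
        nlinarith [mul_nonneg hx₀ variance_nonneg,
          mul_nonneg hx₀ (mul_nonneg hx₀ variance_nonneg)]
    _ ≤ (1 + x) ^ 2 * exp (x * (1 - x)) := by
        gcongr
        exact add_one_le_exp _

variable {N : ℕ} {T : ℝ} [Fact (0 < T)] {A : Set (AddCircle T)}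

lemma prod_one_add_setEigenvalue_pos (hA : MeasurableSet A) :
    0 < ∏ i, (1 + setEigenvalue N A i) :=
  prod_pos fun i _ ↦ by linarith [setEigenvalue_nonneg hA i]

lemma countVariance_div_eight_le_log_prod_sub (hA : MeasurableSet A) :
    countVariance N A / 8 ≤ log (∏ i, (1 + setEigenvalue N A i)) -
      N * AddCircle.haarAddCircle.real A * log 2 := by
  rw [log_prod fun i _ ↦ by linarith [setEigenvalue_nonneg hA i], ← sum_setEigenvalue hA,
    sum_mul, ← sum_sub_distrib, countVariance, sum_div]
  exact sum_le_sum fun i _ ↦ mul_one_sub_div_eight_le_log_one_add_sub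
    (setEigenvalue_nonneg hA i) (setEigenvalue_le_one hA i)

lemma prod_one_add_three_mul_setEigenvalue_le (hA : MeasurableSet A) :
    ∏ i, (1 + 3 * setEigenvalue N A i) ≤
      (∏ i, (1 + setEigenvalue N A i)) ^ 2 * exp (countVariance N A) := by
  rw [countVariance, exp_sum, ← prod_pow, ← prod_mul_distrib]
  exact prod_le_prod (fun i _ ↦ by linarith [setEigenvalue_nonneg hA i]) fun i _ ↦
    one_add_three_mul_le_sq_mul_exp (setEigenvalue_nonneg hA i) (setEigenvalue_le_one hA i)

end BernoulliInequalities

section SecondMoment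

open ProbabilityTheory

variable {Ω ι : Type*} [MeasurableSpace Ω] {μ : Measure Ω}

lemma variance_sum_le_sum_variance [IsFiniteMeasure μ] {s : Finset ι} {X : ι → Ω → ℝ}
    (memLp : ∀ i ∈ s, MemLp (X i) 2 μ)
    (cov_nonpos : ∀ i ∈ s, ∀ j ∈ s, i ≠ j → covariance (X i) (X j) μ ≤ 0) :
    variance (∑ i ∈ s, X i) μ ≤ ∑ i ∈ s, variance (X i) μ := by
  classical
  rw [variance_sum' memLp]
  refine sum_le_sum fun i hi ↦ ?_
  rw [← covariance_self (memLp i hi).aemeasurable, ← add_sum_erase s _ hi]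
  exact add_le_of_nonpos_right <| sum_nonpos fun j hj ↦
    cov_nonpos i hi j (mem_of_mem_erase hj) (ne_of_mem_erase hj).symm

lemma half_le_measureReal_half_integral_le [IsProbabilityMeasure μ] {Z : Ω → ℝ}
    (memLp : MemLp Z 2 μ) (mean_pos : 0 < ∫ ω, Z ω ∂μ)
    (variance_le : 8 * variance Z μ ≤ (∫ ω, Z ω ∂μ) ^ 2) :
    1 / 2 ≤ μ.real {ω | (∫ ω, Z ω ∂μ) / 2 ≤ Z ω} := by
  set M := ∫ ω, Z ω ∂μ
  have tail_le : μ.real {ω | M / 2 ≤ |Z ω - M|} ≤ 1 / 2 := by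
    have chebyshev := ENNReal.toReal_mono ENNReal.ofReal_ne_top
      (meas_ge_le_variance_div_sq memLp (half_pos mean_pos))
    have quotient_nonneg : 0 ≤ variance Z μ / (M / 2) ^ 2 :=
      div_nonneg (variance_nonneg Z μ) (sq_nonneg _)
    rw [ENNReal.toReal_ofReal quotient_nonneg] at chebyshev
    refine chebyshev.trans ((div_le_iff₀ (by positivity)).2 ?_)
    linarith
  have cover : Set.univ ⊆ {ω | M / 2 ≤ Z ω} ∪ {ω | M / 2 ≤ |Z ω - M|} := fun ω _ ↦ by
    rcases le_total (M / 2) (Z ω) with large | small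
    · exact .inl large
    · refine .inr ?_
      rw [Set.mem_ofPred_eq, le_abs]
      right
      linarith
  have one_le : 1 ≤ μ.real {ω | M / 2 ≤ Z ω} + μ.real {ω | M / 2 ≤ |Z ω - M|} := by
    rw [← probReal_univ (μ := μ)]
    exact (measureReal_mono cover).trans (measureReal_union_le _ _)
  linarith

end SecondMoment

section CellWeights

variable {N : ℕ} {θ : ℝ} {j : ℕ}

/-- The `j`-th of the consecutive arcs of length `θ` starting at the angle `0`. -/
def cell (θ : ℝ) (j : ℕ) : Set (AddCircle (2 * π)) := arc (2 * π) (j * θ) (θ + j * θ)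

/-- The weight `2 ^ n`, where `n` is the number of eigenvalue angles in the `j`-th cell. Its
expectation exceeds `2 ^ 𝔼 n` by a factor exponential in the variance of `n`. -/
def cellWeight (θ : ℝ) (j : ℕ) (U : unitaryGroup (Fin N) ℂ) : ℝ := 2 ^ angleCount (cell θ j) U

/-- The common expectation of the weights of all cells of length `θ`. -/
def meanWeight (N : ℕ) (θ : ℝ) : ℝ := ∏ i, (1 + setEigenvalue N (cell θ 0) i)

lemma cell_zero (θ : ℝ) : cell θ 0 = arc (2 * π) 0 θ := by
  rw [cell, Nat.cast_zero, zero_mul, add_zero]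

lemma preimage_add_right_cell (θ : ℝ) (j : ℕ) :
    (fun x ↦ x + ((j * θ : ℝ) : AddCircle (2 * π))) ⁻¹' cell θ j = cell θ 0 := by
  rw [cell_zero, ← preimage_add_right_arc (j * θ), zero_add, cell]

lemma indicator_cell_mem_closedStep (hθ : θ < 2 * π) :
    (cell θ j).indicator 1 ∈ closedStep (AddCircle (2 * π)) :=
  indicator_arc_mem_closedStep (by linarith)

lemma measurableSet_cell (hθ : θ < 2 * π) : MeasurableSet (cell θ j) :=
  measurableSet_arc (by linarith)

lemma disjoint_cell {i : ℕ} (hθ : 0 ≤ θ) (hj : θ + j * θ < 2 * π) (hij : i < j) :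
    Disjoint (cell θ i) (cell θ j) := by
  have succ_le : ((i + 1 : ℕ) : ℝ) * θ ≤ j * θ := by gcongr; exact hij
  push_cast at succ_le
  have : 0 ≤ i * θ := by positivity
  exact disjoint_arc_arc (by linarith) (by linarith) (by linarith) (by linarith)

lemma prod_one_add_mul_setEigenvalue_cell (hθ : θ < 2 * π) (j : ℕ) (c : ℝ) :
    ∏ i, (1 + c * setEigenvalue N (cell θ j) i) =
      ∏ i, (1 + c * setEigenvalue N (cell θ 0) i) := by
  rw [← preimage_add_right_cell θ j,
    prod_one_add_setEigenvalue_preimage_add_right (measurableSet_cell hθ)]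

lemma meanWeight_pos (hθ : θ < 2 * π) : 0 < meanWeight N θ :=
  prod_one_add_setEigenvalue_pos (measurableSet_cell hθ)

lemma countVariance_div_eight_le_log_meanWeight_sub (hθ₀ : 0 ≤ θ) (hθ : θ < 2 * π) :
    countVariance N (cell θ 0) / 8 ≤ log (meanWeight N θ) - N * (θ / (2 * π)) * log 2 := by
  have measure_eq : AddCircle.haarAddCircle.real (cell θ 0) = θ / (2 * π) := by
    rw [cell_zero, haarAddCircle_real_arc hθ₀ (by linarith), sub_zero]
  rw [← measure_eq]
  exact countVariance_div_eight_le_log_prod_sub (measurableSet_cell hθ)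

variable {ℙ : Measure (unitaryGroup (Fin N) ℂ)} [IsProbabilityMeasure ℙ]

lemma memLp_cellWeight (hθ : θ < 2 * π) : MemLp (cellWeight θ j) 2 ℙ := by
  have measurable_count := measurable_angleCount (N := N)
    (indicator_cell_mem_closedStep (j := j) hθ)
  refine .of_bound ((measurable_from_nat (f := fun n ↦ (2 : ℝ) ^ n)).comp
    measurable_count).aestronglyMeasurable (2 ^ N) (ae_of_all _ fun U ↦ ?_)
  rw [cellWeight, norm_pow, Real.norm_two]
  exact pow_le_pow_right₀ one_le_two (angleCount_le _ U)

variable [ℙ.IsMulLeftInvariant]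

lemma integral_one_add_pow_angleCount_cell (hθ : θ < 2 * π) (c : ℝ) :
    ∫ U, (1 + c) ^ angleCount (cell θ j) U ∂ℙ =
      ∏ i, (1 + c * setEigenvalue N (cell θ 0) i) := by
  rw [integral_one_add_pow_angleCount (indicator_cell_mem_closedStep hθ),
    prod_one_add_mul_setEigenvalue_cell hθ]

lemma integral_cellWeight (hθ : θ < 2 * π) : ∫ U, cellWeight θ j U ∂ℙ = meanWeight N θ := by
  simpa only [one_add_one_eq_two, one_mul, cellWeight, meanWeight] using
    integral_one_add_pow_angleCount_cell (ℙ := ℙ) (j := j) hθ 1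

lemma variance_cellWeight_le (hθ : θ < 2 * π) :
    ProbabilityTheory.variance (cellWeight θ j) ℙ ≤
      meanWeight N θ ^ 2 * exp (countVariance N (cell θ 0)) :=
  calc ProbabilityTheory.variance (cellWeight θ j) ℙ
      ≤ ∫ U, cellWeight θ j U ^ 2 ∂ℙ :=
        ProbabilityTheory.variance_le_expectation_sq (memLp_cellWeight hθ).aestronglyMeasurable
    _ = ∫ U, (1 + 3) ^ angleCount (cell θ j) U ∂ℙ := by
        refine integral_congr_ae (ae_of_all _ fun U ↦ ?_)
        simp only [cellWeight]
        rw [← pow_mul, mul_comm, pow_mul]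
        norm_num
    _ = ∏ i, (1 + 3 * setEigenvalue N (cell θ 0) i) :=
        integral_one_add_pow_angleCount_cell hθ 3
    _ ≤ meanWeight N θ ^ 2 * exp (countVariance N (cell θ 0)) :=
        prod_one_add_three_mul_setEigenvalue_le (measurableSet_cell hθ)

lemma covariance_cellWeight_nonpos {i : ℕ} (hθ : 0 ≤ θ) (hj : θ + j * θ < 2 * π)
    (hij : i < j) :
    ProbabilityTheory.covariance (cellWeight θ i) (cellWeight θ j) ℙ ≤ 0 := by
  have hθ' : θ < 2 * π := (le_add_of_nonneg_right (by positivity)).trans_lt hj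
  have prod_eq (k : ℕ) : ∏ i, (1 + setEigenvalue N (cell θ k) i) = meanWeight N θ := by
    simpa only [one_mul, meanWeight] using prod_one_add_mul_setEigenvalue_cell hθ' k 1
  rw [ProbabilityTheory.covariance_eq_sub (memLp_cellWeight hθ') (memLp_cellWeight hθ'),
    sub_nonpos, integral_cellWeight hθ', integral_cellWeight hθ']
  calc ∫ U, cellWeight θ i U * cellWeight θ j U ∂ℙ
      ≤ (∏ k, (1 + setEigenvalue N (cell θ i) k)) * ∏ k, (1 + setEigenvalue N (cell θ j) k) :=
        integral_two_pow_angleCount_mul_le (indicator_cell_mem_closedStep hθ')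
          (indicator_cell_mem_closedStep hθ') (disjoint_cell hθ hj hij)
    _ = meanWeight N θ * meanWeight N θ := by rw [prod_eq, prod_eq]

end CellWeights

section LowerBound

variable {N m : ℕ} {θ : ℝ}

lemma add_mul_lt_of_mem_range (hθ : 0 ≤ θ) (hmθ : m * θ < 2 * π) {j : ℕ} (hj : j ∈ range m) :
    θ + j * θ < 2 * π := by
  have succ_le : ((j + 1 : ℕ) : ℝ) * θ ≤ m * θ := by gcongr; exact mem_range.1 hj
  push_cast at succ_le
  linarith

lemma lt_two_pi_of_mul_lt (hθ : 0 ≤ θ) (hm : 0 < m) (hmθ : m * θ < 2 * π) : θ < 2 * π := by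
  simpa using add_mul_lt_of_mem_range hθ hmθ (mem_range.2 hm)

lemma cellWeight_le {j : ℕ} (hθ : 0 ≤ θ) (hj : θ + j * θ < 2 * π) (U : unitaryGroup (Fin N) ℂ) :
    cellWeight θ j U ≤ (2 : ℝ) ^ (N * (θ / (2 * π)) + 2 * (N * dK N U)) := by
  have count_le := angleCount_arc_le (U := U) (by positivity) (le_add_of_nonneg_left hθ) hj
  rw [add_sub_cancel_right] at count_le
  rw [cellWeight, ← rpow_natCast]
  exact rpow_le_rpow_of_exponent_le one_le_two count_le

lemma log_half_meanWeight_sub_le (hθ : 0 ≤ θ) (hm : 0 < m) (hmθ : m * θ < 2 * π)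
    {U : unitaryGroup (Fin N) ℂ}
    (hU : m * meanWeight N θ / 2 ≤ ∑ j ∈ range m, cellWeight θ j U) :
    log (meanWeight N θ / 2) - N * (θ / (2 * π)) * log 2 ≤ 2 * log 2 * (N * dK N U) := by
  set b : ℝ := N * (θ / (2 * π)) + 2 * (N * dK N U) with b_def
  have sum_le : ∑ j ∈ range m, cellWeight θ j U ≤ m * (2 : ℝ) ^ b := by
    refine (sum_le_card_nsmul _ _ ((2 : ℝ) ^ b) ?_).trans_eq (by rw [card_range, nsmul_eq_mul])
    exact fun j hj ↦ cellWeight_le hθ (add_mul_lt_of_mem_range hθ hmθ hj) U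
  have half_mean_le : meanWeight N θ / 2 ≤ (2 : ℝ) ^ b := by
    have m_pos : (0 : ℝ) < m := by exact_mod_cast hm
    refine le_of_mul_le_mul_left ?_ m_pos
    rw [← mul_div_assoc]
    exact hU.trans sum_le
  have log_le := log_le_log (half_pos (meanWeight_pos (lt_two_pi_of_mul_lt hθ hm hmθ)))
    half_mean_le
  rw [log_rpow two_pos, b_def] at log_le
  linarith

variable {ℙ : Measure (unitaryGroup (Fin N) ℂ)} [IsProbabilityMeasure ℙ] [ℙ.IsMulLeftInvariant]

lemma integral_sum_cellWeight (hθ : θ < 2 * π) (m : ℕ) :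
    ∫ U, (∑ j ∈ range m, cellWeight θ j) U ∂ℙ = m * meanWeight N θ := by
  simp only [Finset.sum_apply]
  rw [integral_finsetSum _ fun j _ ↦ (memLp_cellWeight hθ).integrable one_le_two]
  simp only [integral_cellWeight hθ, sum_const, card_range, nsmul_eq_mul]

lemma eight_mul_variance_sum_cellWeight_le (hθ : 0 ≤ θ) (hm : 0 < m) (hmθ : m * θ < 2 * π)
    (exp_le : 8 * exp (countVariance N (cell θ 0)) ≤ m) :
    8 * ProbabilityTheory.variance (∑ j ∈ range m, cellWeight θ j) ℙ ≤
      (m * meanWeight N θ) ^ 2 := by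
  have hθ' := lt_two_pi_of_mul_lt hθ hm hmθ
  have cov_nonpos : ∀ i ∈ range m, ∀ j ∈ range m, i ≠ j →
      ProbabilityTheory.covariance (cellWeight θ i) (cellWeight θ j) ℙ ≤ 0 := by
    intro i hi j hj ne
    rcases lt_or_gt_of_ne ne with lt | gt
    · exact covariance_cellWeight_nonpos hθ (add_mul_lt_of_mem_range hθ hmθ hj) lt
    · rw [ProbabilityTheory.covariance_comm]
      exact covariance_cellWeight_nonpos hθ (add_mul_lt_of_mem_range hθ hmθ hi) gt
  calc 8 * ProbabilityTheory.variance (∑ j ∈ range m, cellWeight θ j) ℙ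
      ≤ 8 * ∑ j ∈ range m, ProbabilityTheory.variance (cellWeight θ j) ℙ := by
        gcongr
        exact variance_sum_le_sum_variance (fun j _ ↦ memLp_cellWeight hθ') cov_nonpos
    _ ≤ 8 * ∑ j ∈ range m, meanWeight N θ ^ 2 * exp (countVariance N (cell θ 0)) := by
        gcongr
        exact variance_cellWeight_le hθ'
    _ = m * meanWeight N θ ^ 2 * (8 * exp (countVariance N (cell θ 0))) := by
        rw [sum_const, card_range, nsmul_eq_mul]
        ring
    _ ≤ m * meanWeight N θ ^ 2 * m := by gcongr
    _ = (m * meanWeight N θ) ^ 2 := by ring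

lemma half_le_measureReal_log_half_meanWeight_sub_le (hθ : 0 ≤ θ) (hm : 0 < m)
    (hmθ : m * θ < 2 * π) (exp_le : 8 * exp (countVariance N (cell θ 0)) ≤ m) :
    1 / 2 ≤ ℙ.real {U | log (meanWeight N θ / 2) - N * (θ / (2 * π)) * log 2 ≤
      2 * log 2 * (N * dK N U)} := by
  have hθ' := lt_two_pi_of_mul_lt hθ hm hmθ
  have mean_eq := integral_sum_cellWeight (ℙ := ℙ) hθ' m
  have half_le := half_le_measureReal_half_integral_le (Z := ∑ j ∈ range m, cellWeight θ j)
    (memLp_finsetSum' (range m) fun j _ ↦ memLp_cellWeight (ℙ := ℙ) hθ')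
    (by rw [mean_eq]; exact mul_pos (by exact_mod_cast hm) (meanWeight_pos hθ'))
    (by rw [mean_eq]; exact eight_mul_variance_sum_cellWeight_le hθ hm hmθ exp_le)
  rw [mean_eq] at half_le
  refine half_le.trans (measureReal_mono fun U hU ↦ log_half_meanWeight_sub_le hθ hm hmθ ?_)
  rwa [← Finset.sum_apply]

theorem countVariance_cell_div_eight_sub_le (hθ : 0 ≤ θ) (hmθ : m * θ < 2 * π)
    (exp_le : 8 * exp (countVariance N (cell θ 0)) ≤ m) :
    countVariance N (cell θ 0) / 8 - log 2 ≤ 4 * log 2 * (N * ∫ U, dK N U ∂ℙ) := by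
  have hm : 0 < m := by
    have : (0 : ℝ) < m := lt_of_lt_of_le (by positivity) exp_le
    exact_mod_cast this
  have hθ' := lt_two_pi_of_mul_lt hθ hm hmθ
  set excess := log (meanWeight N θ / 2) - N * (θ / (2 * π)) * log 2 with excess_def
  have le_excess : countVariance N (cell θ 0) / 8 - log 2 ≤ excess := by
    rw [excess_def, log_div (meanWeight_pos hθ').ne' two_ne_zero]
    linarith [countVariance_div_eight_le_log_meanWeight_sub (N := N) hθ hθ']
  have bound_nonneg (U : unitaryGroup (Fin N) ℂ) : 0 ≤ 2 * log 2 * (N * dK N U) :=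
    mul_nonneg (by positivity) (mul_nonneg N.cast_nonneg dK_nonneg)
  have markov := mul_meas_ge_le_integral_of_nonneg (ae_of_all ℙ bound_nonneg)
    (((integrable_dK ℙ).const_mul (N : ℝ)).const_mul (2 * log 2)) excess
  have integral_bound_nonneg := integral_nonneg_of_ae (ae_of_all ℙ bound_nonneg)
  have half_le := half_le_measureReal_log_half_meanWeight_sub_le (ℙ := ℙ) hθ hm hmθ exp_le
  rw [integral_const_mul, integral_const_mul] at markov integral_bound_nonneg
  rcases le_or_gt excess 0 with nonpos | pos
  · linarith
  · linarith [mul_le_mul_of_nonneg_left half_le pos.le]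

theorem three_mul_countVariance_cell_div_le (hN : 0 < N) (hθ : 0 ≤ θ) (hmθ : m * θ < 2 * π)
    (exp_le : 8 * exp (countVariance N (cell θ 0)) ≤ m) :
    3 * countVariance N (cell θ 0) / 2 ^ 12 ≤ N * ∫ U, dK N U ∂ℙ := by
  have trivial_le := one_div_two_le_mul_integral_dK (ℙ := ℙ) hN
  rcases lt_or_ge (countVariance N (cell θ 0)) 8 with small | _
  · linarith
  · have lower_bound := countVariance_cell_div_eight_sub_le (ℙ := ℙ) hθ hmθ exp_le
    have log_two_lt : log 2 < 0.7 := log_two_lt_d9.trans (by norm_num)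
    have : log 2 * (N * ∫ U, dK N U ∂ℙ) ≤ 0.7 * (N * ∫ U, dK N U ∂ℙ) := by gcongr
    linarith

lemma eight_mul_exp_countVariance_cell_le_sqrt (hN : exp 150 ≤ N) (hθ₀ : 0 ≤ θ)
    (hθ : θ < 2 * π) : 8 * exp (countVariance N (cell θ 0)) ≤ √N := by
  have N_pos : (0 : ℝ) < N := (exp_pos _).trans_le hN
  have le_log : 150 ≤ log N := (le_log_iff_exp_le N_pos).2 hN
  have inv_pi_sq_le : (π ^ 2)⁻¹ ≤ 1 / 9 := by
    rw [one_div]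
    gcongr
    nlinarith [pi_gt_three]
  have variance_le : countVariance N (cell θ 0) ≤ 1 / 9 * (4 * (1 + log N)) := by
    refine (countVariance_le (measurableSet_cell hθ) fun n hn ↦ ?_).trans
      (mul_le_mul_of_nonneg_right inv_pi_sq_le (by positivity))
    rw [cell_zero]
    exact norm_fourierCoeff_indicator_arc_sq_le hθ₀ (by linarith) hn
  have eight_le : 8 ≤ exp 7 := (by norm_num : (8 : ℝ) = 7 + 1).trans_le (add_one_le_exp 7)
  calc 8 * exp (countVariance N (cell θ 0))
      ≤ exp 7 * exp (countVariance N (cell θ 0)) := by gcongr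
    _ = exp (7 + countVariance N (cell θ 0)) := (exp_add _ _).symm
    _ ≤ exp (log N / 2) := by gcongr; linarith
    _ = √N := by rw [exp_half, exp_log N_pos]

end LowerBound

end CircularUnitary

end

open CircularUnitary

/-- For all sufficiently large `N`: for a Haar-distributed `N × N` unitary matrix,
`𝔼 d_K(μ_N, ν) ≥ 3 Var(𝒩_{N^{-1/2}})/(2¹² N)`. -/
theorem expected_kolmogorov_ge_variance :
    ∃ N₀ : ℕ, ∀ N : ℕ, N₀ ≤ N →
      ∀ ℙ : Measure (Matrix.unitaryGroup (Fin N) ℂ),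
        IsProbabilityMeasure ℙ → ℙ.IsHaarMeasure →
          3 * ProbabilityTheory.variance (fun U => (countFun N U (Real.sqrt N)⁻¹ : ℝ)) ℙ /
              (2 ^ 12 * N) ≤
            ∫ U, dK N U ∂ℙ := by
  refine ⟨⌈exp 150⌉₊, fun N hN ℙ _ _ ↦ ?_⟩
  have exp_le_N : exp 150 ≤ N := Nat.ceil_le.1 hN
  have one_le_N : (1 : ℝ) ≤ N := (one_le_exp (by norm_num)).trans exp_le_N
  have one_le_sqrt : 1 ≤ √N := one_le_sqrt.2 one_le_N
  have pi_gt : 3 < π := pi_gt_three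
  have angle_nonneg : 0 ≤ (√N)⁻¹ := by positivity
  have angle_le_one : (√N)⁻¹ ≤ 1 := inv_le_one_of_one_le₀ one_le_sqrt
  have angle_lt : (√N)⁻¹ < 2 * π := by linarith
  have cells_fit : ⌈√N⌉₊ * (√N)⁻¹ < 2 * π := by
    have ceil_le : (⌈√N⌉₊ : ℝ) ≤ 2 * √N := by linarith [Nat.ceil_lt_add_one (sqrt_nonneg N)]
    calc ⌈√N⌉₊ * (√N)⁻¹ ≤ 2 * √N * (√N)⁻¹ := by gcongr
      _ = 2 := by field_simp
      _ < 2 * π := by linarith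
  have enough_cells : 8 * exp (countVariance N (cell (√N)⁻¹ 0)) ≤ ⌈√N⌉₊ :=
    (eight_mul_exp_countVariance_cell_le_sqrt exp_le_N angle_nonneg angle_lt).trans (Nat.le_ceil _)
  rw [variance_countFun ⟨angle_nonneg, angle_lt⟩, ← cell_zero, ← div_div,
    div_le_iff₀' (by positivity)]
  exact three_mul_countVariance_cell_div_le (by exact_mod_cast one_le_N) angle_nonneg cells_fit
    enough_cells
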